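/- arXiv:2304.01952 — 6 statements merged into one kernel-verified Lean document; each statement's English description precedes it below -/
import Mathlib

section
/- Let α ∈ (0,1] and let θ : ℝ → ℝ be a smooth 1-periodic function. Then the function U(·;θ) is Hölder continuous of exponent α on [0,1] (i.e. there is a constant C with |U(y₁;θ) − U(y₂;θ)| ≤ C|y₁ − y₂|^α for all y₁, y₂ ∈ [0,1]), and U(0;θ) = U(1;θ) = 0. -/
open Real Filter

/-- The second component of the Weierstrass flow. -/
noncomputable def weierstrassU2 (α x y : ℝ) : ℝ :=
  ∑' k : ℕ, (2 : ℝ) ^ (-(α * (k : ℝ))) * Real.cos (2 ^ k * π * x) * Real.sin (2 ^ k * π * y)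

/-- `U(y;θ) = ∫_0^1 u₂(x,y)² θ(x) dx`. -/
noncomputable def weierstrassU (α : ℝ) (θ : ℝ → ℝ) (y : ℝ) : ℝ :=
  ∫ x in (0 : ℝ)..1, (weierstrassU2 α x y) ^ 2 * θ x

/-!
Expanding the square, `U(y;θ)` is the double series of
`2^{-α(j+k)} sin(2^j π y) sin(2^k π y) C_{jk}`, where
`C_{jk} = ∫_0^1 cos(2^j π x) cos(2^k π x) θ(x) dx`. An increment of the sine product over a
distance `d` is at most `2 ((2^j + 2^k) π d)^α`, so it remains to sum
`2^{-α(j+k)} (2^j + 2^k)^α |C_{jk}|`. For `j ≠ k` the frequencies `2^j ± 2^k` are comparable to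
`2^j + 2^k`, so one integration by parts gives `|C_{jk}| ≲ (2^j + 2^k)⁻¹`, which absorbs the factor
`(2^j + 2^k)^α`. For `j = k` there is no decay of `C_{jj}`, but one of the two amplitudes `2^{-αj}`
compensates `2^{jα}`. Either way the `(j,k)` term is `O(2^{-αj/2} 2^{-αk/2})`, a summable product.
-/

section

open MeasureTheory Set

lemma le_rpow_of_le_one_of_le {x t α : ℝ} (hx : 0 ≤ x) (hx1 : x ≤ 1) (hxt : x ≤ t)
    (hα : α ∈ Icc (0 : ℝ) 1) : x ≤ t ^ α :=
  (self_le_rpow_of_le_one hx hx1 hα.2).trans (rpow_le_rpow hx hxt hα.1)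

lemma abs_sin_mul_sin_sub_le (p q y z : ℝ) :
    |sin (p * y) * sin (q * y) - sin (p * z) * sin (q * z)| ≤ (|p| + |q|) * |y - z| := by
  have h_sin (r : ℝ) : |sin (r * y) - sin (r * z)| ≤ |r| * |y - z| := by
    simpa only [← mul_sub, abs_mul] using abs_sin_sub_sin_le (r * y) (r * z)
  calc |sin (p * y) * sin (q * y) - sin (p * z) * sin (q * z)|
      = |(sin (p * y) - sin (p * z)) * sin (q * y)
          + sin (p * z) * (sin (q * y) - sin (q * z))| := by ring_nf
    _ ≤ |sin (p * y) - sin (p * z)| * |sin (q * y)|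
          + |sin (p * z)| * |sin (q * y) - sin (q * z)| := by
        rw [← abs_mul, ← abs_mul]
        exact abs_add_le _ _
    _ ≤ |p| * |y - z| * 1 + 1 * (|q| * |y - z|) :=
        add_le_add
          (mul_le_mul (h_sin p) (abs_sin_le_one _) (abs_nonneg _) (by positivity))
          (mul_le_mul (abs_sin_le_one _) (h_sin q) (abs_nonneg _) zero_le_one)
    _ = (|p| + |q|) * |y - z| := by ring

lemma abs_sin_mul_sin_le_one (s t : ℝ) : |sin s * sin t| ≤ 1 := by
  rw [abs_mul]
  exact mul_le_one₀ (abs_sin_le_one s) (abs_nonneg _) (abs_sin_le_one t)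

lemma abs_sin_mul_sin_sub_le_rpow {α : ℝ} (hα : α ∈ Icc (0 : ℝ) 1) (p q y z : ℝ) :
    |sin (p * y) * sin (q * y) - sin (p * z) * sin (q * z)|
      ≤ 2 * ((|p| + |q|) * |y - z|) ^ α := by
  have h_two := (abs_sub (sin (p * y) * sin (q * y)) (sin (p * z) * sin (q * z))).trans
    (add_le_add (abs_sin_mul_sin_le_one _ _) (abs_sin_mul_sin_le_one _ _))
  have h_lip := abs_sin_mul_sin_sub_le p q y z
  set S := |sin (p * y) * sin (q * y) - sin (p * z) * sin (q * z)|
  have hS : 0 ≤ S := abs_nonneg _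
  have h_half : S / 2 ≤ ((|p| + |q|) * |y - z|) ^ α :=
    le_rpow_of_le_one_of_le (by positivity) (by linarith) (by linarith) hα
  linarith

lemma abs_mul_abs_integral_cos_mul_le {f : ℝ → ℝ} {a b : ℝ} (hab : a ≤ b)
    (hf : AbsolutelyContinuousOnInterval f a b) (ω : ℝ) :
    |ω| * |∫ x in a..b, cos (ω * x) * f x| ≤ |f a| + |f b| + ∫ x in a..b, |deriv f x| := by
  have h_deriv (x : ℝ) : deriv (fun x ↦ sin (ω * x)) x = cos (ω * x) * ω := by
    simpa using (((hasDerivAt_id x).const_mul ω).sin).deriv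
  have h_sin : AbsolutelyContinuousOnInterval (fun x ↦ sin (ω * x)) a b :=
    (by fun_prop : ContDiff ℝ 1 fun x ↦ sin (ω * x)).contDiffOn.absolutelyContinuousOnInterval
  have h_parts : ω * ∫ x in a..b, cos (ω * x) * f x
      = f b * sin (ω * b) - f a * sin (ω * a) - ∫ x in a..b, deriv f x * sin (ω * x) := by
    rw [← hf.integral_mul_deriv_eq_deriv_mul h_sin, ← intervalIntegral.integral_const_mul]
    exact intervalIntegral.integral_congr fun x _ ↦ by simp only [h_deriv]; ring
  have h_mul_sin (c t : ℝ) : |c * sin t| ≤ |c| := by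
    rw [abs_mul]
    exact mul_le_of_le_one_right (abs_nonneg c) (abs_sin_le_one t)
  have h_int : ‖∫ x in a..b, deriv f x * sin (ω * x)‖ ≤ ∫ x in a..b, |deriv f x| :=
    intervalIntegral.norm_integral_le_of_norm_le hab
      (Eventually.of_forall fun x _ ↦ h_mul_sin (deriv f x) (ω * x))
      hf.intervalIntegrable_deriv.abs
  rw [← abs_mul, h_parts]
  calc _ ≤ |f b * sin (ω * b)| + |f a * sin (ω * a)|
        + |∫ x in a..b, deriv f x * sin (ω * x)| :=
        (abs_sub _ _).trans (add_le_add_left (abs_sub _ _) _)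
    _ ≤ |f b| + |f a| + ∫ x in a..b, |deriv f x| :=
        add_le_add (add_le_add (h_mul_sin _ _) (h_mul_sin _ _)) h_int
    _ = _ := by ring

lemma abs_sub_mul_abs_integral_cos_mul_cos_mul_le {f : ℝ → ℝ} {a b p q : ℝ} (hab : a ≤ b)
    (hf : AbsolutelyContinuousOnInterval f a b) (hp : 0 ≤ p) (hq : 0 ≤ q) :
    |p - q| * |∫ x in a..b, cos (p * x) * cos (q * x) * f x|
      ≤ |f a| + |f b| + ∫ x in a..b, |deriv f x| := by
  have h_integrable (ω : ℝ) : IntervalIntegrable (fun x ↦ cos (ω * x) * f x) volume a b :=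
    ((by fun_prop : Continuous fun x ↦ cos (ω * x)).continuousOn.mul
      hf.continuousOn).intervalIntegrable
  have h_split : 2 * ∫ x in a..b, cos (p * x) * cos (q * x) * f x
      = (∫ x in a..b, cos ((p - q) * x) * f x) + ∫ x in a..b, cos ((p + q) * x) * f x := by
    rw [← intervalIntegral.integral_const_mul,
      ← intervalIntegral.integral_add (h_integrable _) (h_integrable _)]
    refine intervalIntegral.integral_congr fun x _ ↦ ?_
    simp only [sub_mul, add_mul, ← add_mul (cos _), ← two_mul_cos_mul_cos]
    ring
  have h_sub := abs_mul_abs_integral_cos_mul_le hab hf (p - q)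
  have h_add := abs_mul_abs_integral_cos_mul_le hab hf (p + q)
  have h_freq : |p - q| ≤ |p + q| := by
    rw [abs_of_nonneg (add_nonneg hp hq), abs_le]
    constructor <;> linarith
  have h_add' := (mul_le_mul_of_nonneg_right h_freq (abs_nonneg _)).trans h_add
  have h_abs := congrArg abs h_split
  rw [abs_mul, abs_two] at h_abs
  have h_bound := mul_le_mul_of_nonneg_left (h_abs.trans_le (abs_add_le _ _)) (abs_nonneg (p - q))
  linarith

lemma two_pow_add_two_pow_le_three_mul_abs_sub {j k : ℕ} (hjk : j ≠ k) :
    (2 : ℝ) ^ j + 2 ^ k ≤ 3 * |(2 : ℝ) ^ j - 2 ^ k| := by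
  wlog hlt : j < k generalizing j k
  · rw [add_comm, abs_sub_comm]
    exact this hjk.symm (lt_of_le_of_ne (not_lt.mp hlt) hjk.symm)
  have h_double : (2 : ℝ) ^ j * 2 ≤ 2 ^ k := by
    rw [← pow_succ]
    exact pow_le_pow_right₀ one_le_two hlt
  linarith [neg_le_abs ((2 : ℝ) ^ j - 2 ^ k)]

lemma hasSum_integral_tsum_sq_mul {X ι : Type*} [MeasurableSpace X] [Countable ι]
    {μ : Measure X} {f : ι → X → ℝ} {c : ι → ℝ} {g : X → ℝ}
    (hf : ∀ i, AEStronglyMeasurable (f i) μ) (hfc : ∀ i x, |f i x| ≤ c i) (hc : Summable c)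
    (hg : Integrable g μ) :
    HasSum (fun p : ι × ι ↦ ∫ x, f p.1 x * f p.2 x * g x ∂μ)
      (∫ x, (∑' i, f i x) ^ 2 * g x ∂μ) := by
  have h_norm (x : X) : Summable fun i ↦ ‖f i x‖ :=
    hc.of_nonneg_of_le (fun _ ↦ norm_nonneg _) fun i ↦ hfc i x
  have hcc : Summable fun p : ι × ι ↦ |c p.1| * |c p.2| :=
    hc.abs.mul_of_nonneg hc.abs (fun _ ↦ abs_nonneg _) fun _ ↦ abs_nonneg _
  refine hasSum_integral_of_dominated_convergence (fun p x ↦ |c p.1| * |c p.2| * |g x|)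
    (fun p ↦ ((hf p.1).mul (hf p.2)).mul hg.aestronglyMeasurable)
    (fun p ↦ Eventually.of_forall fun x ↦ ?_)
    (Eventually.of_forall fun x ↦ hcc.mul_right _) ?_ (Eventually.of_forall fun x ↦ ?_)
  · rw [norm_mul, norm_mul, Real.norm_eq_abs (g x)]
    gcongr
    · exact (hfc p.1 x).trans (le_abs_self _)
    · exact (hfc p.2 x).trans (le_abs_self _)
  · simpa only [tsum_mul_right] using hg.abs.const_mul _
  · rw [pow_two]
    exact ((h_norm x).of_norm.hasSum.mul (h_norm x).of_norm.hasSum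
      (summable_mul_of_summable_norm (h_norm x) (h_norm x))).mul_right (g x)

/-- The amplitude `2^{-αk}` of the `k`-th mode of the Weierstrass flow. -/
noncomputable def weierstrassAmplitude (α : ℝ) (k : ℕ) : ℝ := (2 : ℝ) ^ (-(α * (k : ℝ)))

lemma weierstrassAmplitude_pos (α : ℝ) (k : ℕ) : 0 < weierstrassAmplitude α k :=
  rpow_pos_of_pos two_pos _

lemma weierstrassAmplitude_le_one {α : ℝ} (hα : 0 ≤ α) (k : ℕ) : weierstrassAmplitude α k ≤ 1 :=
  rpow_le_one_of_one_le_of_nonpos one_le_two (neg_nonpos.mpr (by positivity))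

lemma weierstrassAmplitude_add (α β : ℝ) (k : ℕ) :
    weierstrassAmplitude (α + β) k = weierstrassAmplitude α k * weierstrassAmplitude β k := by
  simp only [weierstrassAmplitude, ← rpow_add two_pos]
  ring_nf

lemma weierstrassAmplitude_mul_two_pow_rpow (α : ℝ) (k : ℕ) :
    weierstrassAmplitude α k * ((2 : ℝ) ^ k) ^ α = 1 := by
  rw [weierstrassAmplitude, ← rpow_natCast, ← rpow_mul two_pos.le, ← rpow_add two_pos,
    mul_comm α, neg_add_cancel, rpow_zero]

lemma weierstrassAmplitude_eq_pow (α : ℝ) (k : ℕ) :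
    weierstrassAmplitude α k = ((2 : ℝ) ^ (-α)) ^ k := by
  rw [weierstrassAmplitude, ← rpow_natCast, ← rpow_mul two_pos.le, neg_mul]

lemma summable_weierstrassAmplitude {α : ℝ} (hα : 0 < α) : Summable (weierstrassAmplitude α) := by
  simp only [funext (weierstrassAmplitude_eq_pow α)]
  exact summable_geometric_of_lt_one (rpow_nonneg two_pos.le _)
    (rpow_lt_one_of_one_lt_of_neg one_lt_two (neg_neg_of_pos hα))

/-- The coefficient `C_{jk} = ∫_0^1 cos(2^j π x) cos(2^k π x) θ(x) dx` coupling the modes `j` and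
`k` of the Weierstrass flow in `U(·;θ)`. -/
noncomputable def weierstrassCoupling (θ : ℝ → ℝ) (j k : ℕ) : ℝ :=
  ∫ x in (0 : ℝ)..1, cos (2 ^ j * π * x) * cos (2 ^ k * π * x) * θ x

lemma abs_weierstrassCoupling_le {θ : ℝ → ℝ} (hθ : IntervalIntegrable θ volume 0 1) (j k : ℕ) :
    |weierstrassCoupling θ j k| ≤ ∫ x in (0 : ℝ)..1, |θ x| := by
  rw [← Real.norm_eq_abs]
  refine intervalIntegral.norm_integral_le_of_norm_le zero_le_one
    (Eventually.of_forall fun x _ ↦ ?_) hθ.abs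
  simp only [norm_mul, Real.norm_eq_abs]
  exact mul_le_of_le_one_left (abs_nonneg _)
    (mul_le_one₀ (abs_cos_le_one _) (abs_nonneg _) (abs_cos_le_one _))

lemma add_mul_abs_weierstrassCoupling_le {θ : ℝ → ℝ} (hθ : AbsolutelyContinuousOnInterval θ 0 1)
    {j k : ℕ} (hjk : j ≠ k) :
    (2 ^ j * π + 2 ^ k * π) * |weierstrassCoupling θ j k|
      ≤ 3 * (|θ 0| + |θ 1| + ∫ x in (0 : ℝ)..1, |deriv θ x|) := by
  have h_freq : 2 ^ j * π + 2 ^ k * π ≤ 3 * |2 ^ j * π - 2 ^ k * π| := by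
    rw [← add_mul, ← sub_mul, abs_mul, abs_of_pos pi_pos, ← mul_assoc]
    exact mul_le_mul_of_nonneg_right (two_pow_add_two_pow_le_three_mul_abs_sub hjk) pi_pos.le
  calc (2 ^ j * π + 2 ^ k * π) * |weierstrassCoupling θ j k|
      ≤ 3 * |2 ^ j * π - 2 ^ k * π| * |weierstrassCoupling θ j k| := by gcongr
    _ = 3 * (|2 ^ j * π - 2 ^ k * π| * |weierstrassCoupling θ j k|) := mul_assoc _ _ _
    _ ≤ _ := by
        gcongr
        exact abs_sub_mul_abs_integral_cos_mul_cos_mul_le zero_le_one hθ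
          (by positivity) (by positivity)

lemma weierstrassAmplitude_mul_abs_weierstrassCoupling_self_le {α : ℝ} (hα : α ≤ 1) {θ : ℝ → ℝ}
    (hθ : IntervalIntegrable θ volume 0 1) (k : ℕ) :
    weierstrassAmplitude α k * ((2 ^ k * π + 2 ^ k * π) ^ α * |weierstrassCoupling θ k k|)
      ≤ 2 * π * ∫ x in (0 : ℝ)..1, |θ x| := by
  have h_one_le : 1 ≤ 2 * π := by linarith [pi_gt_three]
  calc _ = (weierstrassAmplitude α k * (2 ^ k) ^ α) * (2 * π) ^ α
        * |weierstrassCoupling θ k k| := by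
        rw [show 2 ^ k * π + 2 ^ k * π = 2 ^ k * (2 * π) by ring,
          mul_rpow (by positivity) (by positivity)]
        ring
    _ = (2 * π) ^ α * |weierstrassCoupling θ k k| := by
        rw [weierstrassAmplitude_mul_two_pow_rpow, one_mul]
    _ ≤ 2 * π * ∫ x in (0 : ℝ)..1, |θ x| := by
        gcongr
        · exact rpow_le_self_of_one_le h_one_le hα
        · exact abs_weierstrassCoupling_le hθ k k

lemma rpow_mul_abs_weierstrassCoupling_le {α : ℝ} (hα : α ≤ 1) {θ : ℝ → ℝ}
    (hθ : AbsolutelyContinuousOnInterval θ 0 1) {j k : ℕ} (hjk : j ≠ k) :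
    (2 ^ j * π + 2 ^ k * π) ^ α * |weierstrassCoupling θ j k|
      ≤ 3 * (|θ 0| + |θ 1| + ∫ x in (0 : ℝ)..1, |deriv θ x|) := by
  have h_one_le (i : ℕ) : 1 ≤ 2 ^ i * π :=
    one_le_mul_of_one_le_of_one_le (one_le_pow₀ one_le_two) (by linarith [pi_gt_three])
  refine le_trans ?_ (add_mul_abs_weierstrassCoupling_le hθ hjk)
  gcongr
  exact rpow_le_self_of_one_le (by linarith [h_one_le j, h_one_le k]) hα

lemma exists_weierstrassAmplitude_mul_weierstrassCoupling_le {α : ℝ} (hα : α ∈ Icc (0 : ℝ) 1)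
    {θ : ℝ → ℝ} (hθ : AbsolutelyContinuousOnInterval θ 0 1) :
    ∃ K : ℝ, ∀ j k, weierstrassAmplitude α j * weierstrassAmplitude α k
        * ((2 ^ j * π + 2 ^ k * π) ^ α * |weierstrassCoupling θ j k|)
      ≤ weierstrassAmplitude (α / 2) j * weierstrassAmplitude (α / 2) k * K := by
  have hθ_int : IntervalIntegrable θ volume 0 1 := hθ.continuousOn.intervalIntegrable
  have h_half (k : ℕ) : weierstrassAmplitude α k
      = weierstrassAmplitude (α / 2) k * weierstrassAmplitude (α / 2) k := by
    rw [← weierstrassAmplitude_add, add_halves]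
  refine ⟨max (2 * π * ∫ x in (0 : ℝ)..1, |θ x|)
    (3 * (|θ 0| + |θ 1| + ∫ x in (0 : ℝ)..1, |deriv θ x|)), fun j k ↦ ?_⟩
  have h_pos := weierstrassAmplitude_pos (α / 2)
  rcases eq_or_ne j k with rfl | hjk
  · rw [mul_assoc, ← h_half]
    have hj_pos := weierstrassAmplitude_pos α j
    gcongr
    exact (weierstrassAmplitude_mul_abs_weierstrassCoupling_self_le hα.2 hθ_int j).trans
      (le_max_left _ _)
  · have h_le (i : ℕ) : weierstrassAmplitude α i ≤ weierstrassAmplitude (α / 2) i := by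
      rw [h_half]
      exact mul_le_of_le_one_left (h_pos i).le
        (weierstrassAmplitude_le_one (div_nonneg hα.1 two_pos.le) i)
    have hj_pos := h_pos j
    have hk_pos := weierstrassAmplitude_pos α k
    gcongr
    · exact mul_nonneg (h_pos j).le (h_pos k).le
    · exact h_le j
    · exact h_le k
    · exact (rpow_mul_abs_weierstrassCoupling_le hα.2 hθ hjk).trans (le_max_right _ _)

lemma hasSum_weierstrassU {α : ℝ} (hα : 0 < α) {θ : ℝ → ℝ}
    (hθ : IntervalIntegrable θ volume 0 1) (y : ℝ) :
    HasSum (fun p : ℕ × ℕ ↦ weierstrassAmplitude α p.1 * weierstrassAmplitude α p.2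
        * weierstrassCoupling θ p.1 p.2 * (sin (2 ^ p.1 * π * y) * sin (2 ^ p.2 * π * y)))
      (weierstrassU α θ y) := by
  let mode (k : ℕ) (x : ℝ) : ℝ :=
    weierstrassAmplitude α k * cos (2 ^ k * π * x) * sin (2 ^ k * π * y)
  have h_mode (k : ℕ) (x : ℝ) : |mode k x| ≤ weierstrassAmplitude α k := by
    simp only [mode, abs_mul, abs_of_pos (weierstrassAmplitude_pos α k), mul_assoc]
    exact mul_le_of_le_one_right (weierstrassAmplitude_pos α k).le
      (mul_le_one₀ (abs_cos_le_one _) (abs_nonneg _) (abs_sin_le_one _))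
  have h_sum := hasSum_integral_tsum_sq_mul (μ := volume.restrict (Ioc 0 1))
    (fun k ↦ (by fun_prop : Continuous (mode k)).aestronglyMeasurable) h_mode
    (summable_weierstrassAmplitude hα) ((intervalIntegrable_iff_integrableOn_Ioc_of_le
      zero_le_one).mp hθ)
  simp only [← intervalIntegral.integral_of_le zero_le_one] at h_sum
  refine h_sum.congr_fun fun p ↦ ?_
  rw [weierstrassCoupling, ← intervalIntegral.integral_const_mul,
    ← intervalIntegral.integral_mul_const]
  exact intervalIntegral.integral_congr fun x _ ↦ by simp only [mode]; ring

lemma abs_weierstrassU_term_sub_le {α : ℝ} (hα : α ∈ Icc (0 : ℝ) 1) (θ : ℝ → ℝ) (j k : ℕ)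
    (y z : ℝ) :
    |weierstrassAmplitude α j * weierstrassAmplitude α k * weierstrassCoupling θ j k
        * (sin (2 ^ j * π * y) * sin (2 ^ k * π * y))
      - weierstrassAmplitude α j * weierstrassAmplitude α k * weierstrassCoupling θ j k
        * (sin (2 ^ j * π * z) * sin (2 ^ k * π * z))|
      ≤ weierstrassAmplitude α j * weierstrassAmplitude α k
        * ((2 ^ j * π + 2 ^ k * π) ^ α * |weierstrassCoupling θ j k|) * (2 * |y - z| ^ α) := by
  have h_freq (i : ℕ) : 0 < 2 ^ i * π := by positivity
  have h_sin := abs_sin_mul_sin_sub_le_rpow hα (2 ^ j * π) (2 ^ k * π) y z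
  rw [abs_of_pos (h_freq j), abs_of_pos (h_freq k),
    mul_rpow (add_pos (h_freq j) (h_freq k)).le (abs_nonneg _)] at h_sin
  have hj := weierstrassAmplitude_pos α j
  have hk := weierstrassAmplitude_pos α k
  rw [← mul_sub, abs_mul, abs_mul, abs_of_pos (mul_pos hj hk)]
  calc _ ≤ weierstrassAmplitude α j * weierstrassAmplitude α k * |weierstrassCoupling θ j k|
        * (2 * ((2 ^ j * π + 2 ^ k * π) ^ α * |y - z| ^ α)) := by gcongr
    _ = _ := by ring

lemma exists_abs_weierstrassU_sub_le_mul_rpow {α : ℝ} (hα : α ∈ Ioc (0 : ℝ) 1) {θ : ℝ → ℝ}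
    (hθ : AbsolutelyContinuousOnInterval θ 0 1) :
    ∃ C : ℝ, ∀ y z, |weierstrassU α θ y - weierstrassU α θ z| ≤ C * |y - z| ^ α := by
  have hα' : α ∈ Icc (0 : ℝ) 1 := Ioc_subset_Icc_self hα
  obtain ⟨K, hK⟩ := exists_weierstrassAmplitude_mul_weierstrassCoupling_le hα' hθ
  have h_half := summable_weierstrassAmplitude (half_pos hα.1)
  have h_prod : Summable fun p : ℕ × ℕ ↦
      weierstrassAmplitude (α / 2) p.1 * weierstrassAmplitude (α / 2) p.2 :=
    h_half.mul_of_nonneg h_half (fun k ↦ (weierstrassAmplitude_pos _ k).le)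
      fun k ↦ (weierstrassAmplitude_pos _ k).le
  refine ⟨(∑' p : ℕ × ℕ, weierstrassAmplitude (α / 2) p.1 * weierstrassAmplitude (α / 2) p.2)
    * (2 * K), fun y z ↦ ?_⟩
  have h_series (t : ℝ) := hasSum_weierstrassU hα.1 hθ.continuousOn.intervalIntegrable t
  rw [← Real.norm_eq_abs, mul_assoc, ← ((h_series y).sub (h_series z)).tsum_eq]
  refine tsum_of_norm_bounded (h_prod.hasSum.mul_right (2 * K * |y - z| ^ α)) fun p ↦ ?_
  calc _ ≤ _ := abs_weierstrassU_term_sub_le hα' θ p.1 p.2 y z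
    _ ≤ weierstrassAmplitude (α / 2) p.1 * weierstrassAmplitude (α / 2) p.2 * K
        * (2 * |y - z| ^ α) := mul_le_mul_of_nonneg_right (hK p.1 p.2) (by positivity)
    _ = _ := by ring

lemma weierstrassU_intCast (α : ℝ) (θ : ℝ → ℝ) (n : ℤ) : weierstrassU α θ n = 0 := by
  have h_sin (k : ℕ) : sin (2 ^ k * π * n) = 0 := by
    rw [mul_right_comm]
    exact_mod_cast sin_int_mul_pi (2 ^ k * n)
  simp [weierstrassU, weierstrassU2, h_sin]

theorem weierstrassU_holder_general {α : ℝ} (hα : α ∈ Ioc (0 : ℝ) 1) {θ : ℝ → ℝ}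
    (hθ : AbsolutelyContinuousOnInterval θ 0 1) :
    (∃ C : ℝ, ∀ y₁ y₂, |weierstrassU α θ y₁ - weierstrassU α θ y₂| ≤ C * |y₁ - y₂| ^ α)
    ∧ ∀ n : ℤ, weierstrassU α θ n = 0 :=
  ⟨exists_abs_weierstrassU_sub_le_mul_rpow hα hθ, weierstrassU_intCast α θ⟩

end

/-- For a smooth `1`-periodic test function `θ`, the function `U(·;θ)` is `α`-Hölder continuous
on `[0,1]` and vanishes at `y = 0` and `y = 1`. -/
theorem weierstrassU_holder (α : ℝ) (hα : α ∈ Set.Ioc (0 : ℝ) 1)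
    (θ : ℝ → ℝ) (hθ : ContDiff ℝ (⊤ : ℕ∞) θ) (hper : Function.Periodic θ 1) :
    (∃ C : ℝ, ∀ y₁ ∈ Set.Icc (0 : ℝ) 1, ∀ y₂ ∈ Set.Icc (0 : ℝ) 1,
      |weierstrassU α θ y₁ - weierstrassU α θ y₂| ≤ C * |y₁ - y₂| ^ α)
    ∧ weierstrassU α θ 0 = 0 ∧ weierstrassU α θ 1 = 0 := by
  obtain ⟨⟨C, hC⟩, h_int⟩ :=
    weierstrassU_holder_general hα (hθ.of_le (by simp)).contDiffOn.absolutelyContinuousOnInterval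
  exact ⟨⟨C, fun y₁ _ y₂ _ ↦ hC y₁ y₂⟩, by simpa using h_int 0, by simpa using h_int 1⟩
end

section
/- Let α > 0 and let θ : ℝ → ℝ be a smooth 1-periodic function. Then the double series U_{NR}(y) := ∑_{k₁,k₂ ≥ 0, k₁ ≠ k₂} 2^{−α(k₁+k₂)} ( ∫_0^1 cos(2^{k₁} π x) cos(2^{k₂} π x) θ(x) dx ) sin(2^{k₁} π y) sin(2^{k₂} π y) converges uniformly on [0,1], its term-by-term derivative series in y also converges uniformly on [0,1], the sum U_{NR} is continuously differentiable on [0,1], and U_{NR}'(0) = 0. -/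
open Real Filter

/-- The coefficient `∫_0^1 cos(2^{k₁}πx) cos(2^{k₂}πx) θ(x) dx`. -/
noncomputable def nrCoeff (θ : ℝ → ℝ) (k₁ k₂ : ℕ) : ℝ :=
  ∫ x in (0 : ℝ)..1, Real.cos (2 ^ k₁ * π * x) * Real.cos (2 ^ k₂ * π * x) * θ x

/-- A term of the nonresonant double series `U_{NR}` (zero on the diagonal `k₁ = k₂`). -/
noncomputable def nrTerm (α : ℝ) (θ : ℝ → ℝ) (p : ℕ × ℕ) (y : ℝ) : ℝ :=
  if p.1 = p.2 then 0 else
    (2 : ℝ) ^ (-(α * ((p.1 : ℝ) + (p.2 : ℝ)))) * nrCoeff θ p.1 p.2 *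
      Real.sin (2 ^ p.1 * π * y) * Real.sin (2 ^ p.2 * π * y)

/-- The term-by-term `y`-derivative of `nrTerm`. -/
noncomputable def nrTermDeriv (α : ℝ) (θ : ℝ → ℝ) (p : ℕ × ℕ) (y : ℝ) : ℝ :=
  if p.1 = p.2 then 0 else
    (2 : ℝ) ^ (-(α * ((p.1 : ℝ) + (p.2 : ℝ)))) * nrCoeff θ p.1 p.2 *
      (2 ^ p.1 * π * Real.cos (2 ^ p.1 * π * y) * Real.sin (2 ^ p.2 * π * y)
        + 2 ^ p.2 * π * Real.sin (2 ^ p.1 * π * y) * Real.cos (2 ^ p.2 * π * y))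

/-!
Expanding `cos a * cos b` into `cos (a - b)` and `cos (a + b)` and integrating by parts once bounds
the coefficient by a multiple of `1 / |2 ^ k₁ - 2 ^ k₂|`. Distinct powers of two are separated
proportionally to their sum, so this decay absorbs the factor `2 ^ k₁ + 2 ^ k₂` produced by
differentiating the term. Both series are then dominated by a multiple of `∑ 2 ^ (-α (k₁ + k₂))`.
-/

/-- The quantity `|f a| + |f b| + ∫ |f'|`, which controls integration by parts of `f` against a
bounded function. The outer absolute value around the integral allows `b < a`. -/
noncomputable def boundaryVariation (f : ℝ → ℝ) (a b : ℝ) : ℝ :=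
  |f a| + |f b| + |(∫ x in a..b, |deriv f x|)|

lemma boundaryVariation_nonneg (f : ℝ → ℝ) (a b : ℝ) : 0 ≤ boundaryVariation f a b := by
  unfold boundaryVariation
  positivity

section OscillatoryIntegrals

variable {f : ℝ → ℝ} {a b : ℝ}

lemma mul_integral_cos_mul_eq (hf : AbsolutelyContinuousOnInterval f a b) (ω : ℝ) :
    ω * ∫ x in a..b, cos (ω * x) * f x =
      f b * sin (ω * b) - f a * sin (ω * a) - ∫ x in a..b, deriv f x * sin (ω * x) := by
  have hsin : AbsolutelyContinuousOnInterval (fun x => sin (ω * x)) a b :=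
    ContDiffOn.absolutelyContinuousOnInterval (by fun_prop)
  have hderiv (x : ℝ) : deriv (fun x => sin (ω * x)) x = ω * cos (ω * x) := by
    simpa [mul_comm] using ((hasDerivAt_id x).const_mul ω).sin.deriv
  rw [← hf.integral_mul_deriv_eq_deriv_mul hsin, ← intervalIntegral.integral_const_mul]
  simp only [hderiv]
  congr 1 with x
  ring

lemma abs_integral_mul_le_of_abs_le_one {g : ℝ → ℝ}
    (hf : IntervalIntegrable f MeasureTheory.volume a b) (hg : ∀ x, |g x| ≤ 1) :
    |∫ x in a..b, f x * g x| ≤ |(∫ x in a..b, |f x|)| := by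
  rw [← norm_eq_abs]
  refine intervalIntegral.norm_integral_le_abs_of_norm_le (.of_forall fun x => ?_) hf.abs
  rw [norm_mul]
  exact mul_le_of_le_one_right (abs_nonneg (f x)) (hg x)

lemma abs_mul_integral_cos_mul_le (hf : AbsolutelyContinuousOnInterval f a b) (ω : ℝ) :
    |ω * ∫ x in a..b, cos (ω * x) * f x| ≤ boundaryVariation f a b := by
  have hbound (c x : ℝ) : |c * sin x| ≤ |c| := by
    rw [abs_mul]
    exact mul_le_of_le_one_right (abs_nonneg c) (abs_sin_le_one x)
  calc |ω * ∫ x in a..b, cos (ω * x) * f x|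
      = |f b * sin (ω * b) - f a * sin (ω * a) - ∫ x in a..b, deriv f x * sin (ω * x)| := by
        rw [mul_integral_cos_mul_eq hf]
    _ ≤ |f b * sin (ω * b)| + |f a * sin (ω * a)| + |∫ x in a..b, deriv f x * sin (ω * x)| :=
        (abs_sub _ _).trans (by gcongr; exact abs_sub _ _)
    _ ≤ |f b| + |f a| + |(∫ x in a..b, |deriv f x|)| :=
        add_le_add (add_le_add (hbound _ _) (hbound _ _))
          (abs_integral_mul_le_of_abs_le_one hf.intervalIntegrable_deriv fun x => abs_sin_le_one _)
    _ = boundaryVariation f a b := by rw [boundaryVariation, add_comm |f b|]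

lemma two_mul_integral_cos_mul_cos_mul (hf : ContinuousOn f (Set.uIcc a b)) (ω η : ℝ) :
    2 * ∫ x in a..b, cos (ω * x) * cos (η * x) * f x =
      (∫ x in a..b, cos ((ω - η) * x) * f x) + ∫ x in a..b, cos ((ω + η) * x) * f x := by
  rw [← intervalIntegral.integral_add (ContinuousOn.intervalIntegrable (by fun_prop))
    (ContinuousOn.intervalIntegrable (by fun_prop)), ← intervalIntegral.integral_const_mul]
  congr 1 with x
  rw [← add_mul, sub_mul, add_mul ω, ← two_mul_cos_mul_cos]
  ring

lemma abs_sub_mul_abs_integral_cos_mul_cos_mul_le_s7 (hf : AbsolutelyContinuousOnInterval f a b)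
    {ω η : ℝ} (hω : 0 ≤ ω) (hη : 0 ≤ η) :
    |ω - η| * |∫ x in a..b, cos (ω * x) * cos (η * x) * f x| ≤ boundaryVariation f a b := by
  let I (ν : ℝ) : ℝ := ∫ x in a..b, cos (ν * x) * f x
  have hI (ν : ℝ) : |ν| * |I ν| ≤ boundaryVariation f a b := by
    simpa only [abs_mul] using abs_mul_integral_cos_mul_le hf ν
  have hfreq : |ω - η| ≤ |ω + η| := by
    rw [abs_of_nonneg (add_nonneg hω hη), abs_le]
    constructor <;> linarith
  suffices 2 * (|ω - η| * |∫ x in a..b, cos (ω * x) * cos (η * x) * f x|) ≤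
      2 * boundaryVariation f a b by linarith
  calc 2 * (|ω - η| * |∫ x in a..b, cos (ω * x) * cos (η * x) * f x|)
      = |ω - η| * |2 * ∫ x in a..b, cos (ω * x) * cos (η * x) * f x| := by
        rw [abs_mul, abs_two]; ring
    _ = |ω - η| * |I (ω - η) + I (ω + η)| := by
        rw [two_mul_integral_cos_mul_cos_mul hf.continuousOn]
    _ ≤ |ω - η| * |I (ω - η)| + |ω - η| * |I (ω + η)| := by
        rw [← mul_add]; gcongr; exact abs_add_le _ _
    _ ≤ |ω - η| * |I (ω - η)| + |ω + η| * |I (ω + η)| := by gcongr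
    _ ≤ 2 * boundaryVariation f a b := by linarith [hI (ω - η), hI (ω + η)]

end OscillatoryIntegrals

lemma two_pow_add_two_pow_le_three_mul_abs_sub_s7 {m n : ℕ} (hmn : m ≠ n) :
    (2 : ℝ) ^ m + 2 ^ n ≤ 3 * |(2 : ℝ) ^ m - 2 ^ n| := by
  wlog hlt : m < n generalizing m n
  · rw [add_comm, abs_sub_comm]
    exact this hmn.symm (by lia)
  have hdouble : (2 : ℝ) * 2 ^ m ≤ 2 ^ n := by
    rw [← pow_succ']
    exact pow_le_pow_right₀ one_le_two hlt
  linarith [neg_le_abs ((2 : ℝ) ^ m - 2 ^ n)]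

lemma summable_rpow_neg_mul_add {b α : ℝ} (hb : 1 < b) (hα : 0 < α) :
    Summable fun p : ℕ × ℕ => b ^ (-(α * ((p.1 : ℝ) + (p.2 : ℝ)))) := by
  have hgeom : Summable fun n : ℕ => (b ^ (-α)) ^ n :=
    summable_geometric_of_lt_one (by positivity)
      (rpow_lt_one_of_one_lt_of_neg hb (neg_neg_of_pos hα))
  refine (hgeom.mul_of_nonneg hgeom (fun _ => by positivity) fun _ => by positivity).congr
    fun p => ?_
  rw [← pow_add, ← rpow_mul_natCast (by positivity), Nat.cast_add, neg_mul]

section SineProducts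

variable (ω η : ℝ)

lemma hasDerivAt_sin_mul_sin (y : ℝ) :
    HasDerivAt (fun y => sin (ω * y) * sin (η * y))
      (ω * cos (ω * y) * sin (η * y) + η * sin (ω * y) * cos (η * y)) y := by
  have hsin (ν : ℝ) : HasDerivAt (fun y => sin (ν * y)) (cos (ν * y) * ν) y := by
    simpa using ((hasDerivAt_id y).const_mul ν).sin
  exact ((hsin ω).mul (hsin η)).congr_deriv (by ring)

lemma abs_mul_cos_mul_sin_add_mul_sin_mul_cos_le (u v : ℝ) :
    |ω * cos u * sin v + η * sin u * cos v| ≤ |ω| + |η| := by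
  refine (abs_add_le _ _).trans (add_le_add ?_ ?_) <;> rw [mul_assoc, abs_mul, abs_mul]
  · exact mul_le_of_le_one_right (abs_nonneg ω)
      (mul_le_one₀ (abs_cos_le_one u) (abs_nonneg _) (abs_sin_le_one v))
  · exact mul_le_of_le_one_right (abs_nonneg η)
      (mul_le_one₀ (abs_sin_le_one u) (abs_nonneg _) (abs_cos_le_one v))

end SineProducts

/-- The summable weight dominating both `nrTerm` and `nrTermDeriv`, uniformly in `y`. The factor
`3` is the separation constant of distinct powers of two. -/
noncomputable def nrMajorant (α : ℝ) (θ : ℝ → ℝ) (p : ℕ × ℕ) : ℝ :=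
  (2 : ℝ) ^ (-(α * ((p.1 : ℝ) + (p.2 : ℝ)))) * (3 * boundaryVariation θ 0 1)

section Series

variable {α : ℝ} {θ : ℝ → ℝ}

lemma nrMajorant_nonneg (α : ℝ) (θ : ℝ → ℝ) (p : ℕ × ℕ) : 0 ≤ nrMajorant α θ p := by
  have := boundaryVariation_nonneg θ 0 1
  unfold nrMajorant
  positivity

lemma summable_nrMajorant (hα : 0 < α) (θ : ℝ → ℝ) : Summable (nrMajorant α θ) :=
  (summable_rpow_neg_mul_add one_lt_two hα).mul_right _

lemma abs_nrCoeff_mul_le (hθ : AbsolutelyContinuousOnInterval θ 0 1) {k₁ k₂ : ℕ} (hk : k₁ ≠ k₂) :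
    |nrCoeff θ k₁ k₂| * (2 ^ k₁ * π + 2 ^ k₂ * π) ≤ 3 * boundaryVariation θ 0 1 := by
  have hosc : |2 ^ k₁ * π - 2 ^ k₂ * π| * |nrCoeff θ k₁ k₂| ≤ boundaryVariation θ 0 1 :=
    abs_sub_mul_abs_integral_cos_mul_cos_mul_le_s7 hθ (by positivity) (by positivity)
  have hsep : 2 ^ k₁ * π + 2 ^ k₂ * π ≤ 3 * |2 ^ k₁ * π - 2 ^ k₂ * π| := by
    rw [← add_mul, ← sub_mul, abs_mul, abs_of_pos pi_pos, ← mul_assoc]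
    gcongr
    exact two_pow_add_two_pow_le_three_mul_abs_sub_s7 hk
  linarith [mul_le_mul_of_nonneg_left hsep (abs_nonneg (nrCoeff θ k₁ k₂))]

lemma abs_nrCoeff_le (hθ : AbsolutelyContinuousOnInterval θ 0 1) {k₁ k₂ : ℕ} (hk : k₁ ≠ k₂) :
    |nrCoeff θ k₁ k₂| ≤ 3 * boundaryVariation θ 0 1 := by
  have hfreq : 1 ≤ 2 ^ k₁ * π + 2 ^ k₂ * π :=
    calc (1 : ℝ) ≤ 2 ^ k₁ * π :=
          one_le_mul_of_one_le_of_one_le (one_le_pow₀ one_le_two) (by linarith [pi_gt_three])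
      _ ≤ 2 ^ k₁ * π + 2 ^ k₂ * π := le_add_of_nonneg_right (by positivity)
  exact (le_mul_of_one_le_right (abs_nonneg _) hfreq).trans (abs_nrCoeff_mul_le hθ hk)

lemma norm_nrTerm_le (α : ℝ) (hθ : AbsolutelyContinuousOnInterval θ 0 1) (p : ℕ × ℕ) (y : ℝ) :
    ‖nrTerm α θ p y‖ ≤ nrMajorant α θ p := by
  rw [nrTerm]
  split_ifs with hp
  · simpa only [norm_zero] using nrMajorant_nonneg α θ p
  have hsin : |sin (2 ^ p.1 * π * y) * sin (2 ^ p.2 * π * y)| ≤ 1 := by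
    rw [abs_mul]
    exact mul_le_one₀ (abs_sin_le_one _) (abs_nonneg _) (abs_sin_le_one _)
  rw [mul_assoc, mul_assoc, norm_mul, norm_of_nonneg (by positivity), nrMajorant, norm_mul]
  refine mul_le_mul_of_nonneg_left ?_ (by positivity)
  exact (mul_le_of_le_one_right (abs_nonneg _) hsin).trans (abs_nrCoeff_le hθ hp)

lemma norm_nrTermDeriv_le (α : ℝ) (hθ : AbsolutelyContinuousOnInterval θ 0 1) (p : ℕ × ℕ)
    (y : ℝ) : ‖nrTermDeriv α θ p y‖ ≤ nrMajorant α θ p := by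
  rw [nrTermDeriv]
  split_ifs with hp
  · simpa only [norm_zero] using nrMajorant_nonneg α θ p
  have hderiv := abs_mul_cos_mul_sin_add_mul_sin_mul_cos_le (2 ^ p.1 * π) (2 ^ p.2 * π)
    (2 ^ p.1 * π * y) (2 ^ p.2 * π * y)
  rw [abs_of_pos (by positivity : 0 < 2 ^ p.1 * π), abs_of_pos (by positivity : 0 < 2 ^ p.2 * π)]
    at hderiv
  rw [mul_assoc, norm_mul, norm_of_nonneg (by positivity), nrMajorant, norm_mul]
  refine mul_le_mul_of_nonneg_left ?_ (by positivity)
  exact (mul_le_mul_of_nonneg_left hderiv (abs_nonneg _)).trans (abs_nrCoeff_mul_le hθ hp)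

lemma hasDerivAt_nrTerm (α : ℝ) (θ : ℝ → ℝ) (p : ℕ × ℕ) (y : ℝ) :
    HasDerivAt (nrTerm α θ p) (nrTermDeriv α θ p y) y := by
  unfold nrTerm nrTermDeriv
  split_ifs
  · exact hasDerivAt_const y 0
  · simpa only [mul_assoc] using
      (hasDerivAt_sin_mul_sin (2 ^ p.1 * π) (2 ^ p.2 * π) y).const_mul
        ((2 : ℝ) ^ (-(α * ((p.1 : ℝ) + (p.2 : ℝ)))) * nrCoeff θ p.1 p.2)

lemma continuous_nrTermDeriv (α : ℝ) (θ : ℝ → ℝ) (p : ℕ × ℕ) :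
    Continuous (nrTermDeriv α θ p) := by
  unfold nrTermDeriv
  split_ifs <;> fun_prop

lemma nrTermDeriv_zero (α : ℝ) (θ : ℝ → ℝ) (p : ℕ × ℕ) : nrTermDeriv α θ p 0 = 0 := by
  simp [nrTermDeriv]

theorem nonresonant_series_C1_general (hα : 0 < α) (hθ : AbsolutelyContinuousOnInterval θ 0 1) :
    ∃ V g : ℝ → ℝ,
      TendstoUniformly (fun (s : Finset (ℕ × ℕ)) (y : ℝ) => ∑ p ∈ s, nrTerm α θ p y) V atTop
      ∧ TendstoUniformly (fun (s : Finset (ℕ × ℕ)) (y : ℝ) => ∑ p ∈ s, nrTermDeriv α θ p y)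
        g atTop
      ∧ (∀ y, HasDerivAt V (g y) y)
      ∧ Continuous g
      ∧ g 0 = 0 := by
  have hsum := summable_nrMajorant hα θ
  have hV := norm_nrTerm_le α hθ
  have hg := norm_nrTermDeriv_le α hθ
  refine ⟨fun y => ∑' p, nrTerm α θ p y, fun y => ∑' p, nrTermDeriv α θ p y,
    tendstoUniformly_tsum hsum hV, tendstoUniformly_tsum hsum hg,
    hasDerivAt_tsum hsum (hasDerivAt_nrTerm α θ) hg (hsum.of_norm_bounded fun p => hV p 0),
    continuous_tsum (continuous_nrTermDeriv α θ) hsum hg, ?_⟩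
  simp only [nrTermDeriv_zero, tsum_zero]

end Series

/-- The nonresonant double series `U_{NR}` converges uniformly on `[0,1]`, its term-by-term
derivative series converges uniformly on `[0,1]`, the sum is continuously differentiable on
`[0,1]` with derivative the sum of the derivative series, and the derivative at `0` is `0`. -/
theorem nonresonant_series_C1 (α : ℝ) (hα : 0 < α) (θ : ℝ → ℝ) (hθ : ContDiff ℝ (⊤ : ℕ∞) θ)
    (hper : Function.Periodic θ 1) :
    ∃ V g : ℝ → ℝ,
      TendstoUniformlyOn (fun (s : Finset (ℕ × ℕ)) (y : ℝ) => ∑ p ∈ s, nrTerm α θ p y)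
        V atTop (Set.Icc 0 1)
      ∧ TendstoUniformlyOn (fun (s : Finset (ℕ × ℕ)) (y : ℝ) => ∑ p ∈ s, nrTermDeriv α θ p y)
        g atTop (Set.Icc 0 1)
      ∧ (∀ y ∈ Set.Icc (0 : ℝ) 1, HasDerivAt V (g y) y)
      ∧ ContinuousOn g (Set.Icc 0 1)
      ∧ g 0 = 0 := by
  obtain ⟨V, g, hV, hg, hderiv, hcont, hzero⟩ := nonresonant_series_C1_general hα
    (hθ.of_le (by simp)).contDiffOn.absolutelyContinuousOnInterval
  exact ⟨V, g, hV.tendstoUniformlyOn, hg.tendstoUniformlyOn, fun y _ => hderiv y,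
    hcont.continuousOn, hzero⟩
end

section
/- Let 0 < α < 1/2 and let θ : ℝ → ℝ be a smooth 1-periodic function with ∫_0^1 θ(x) dx ≠ 0. Then 2^n |U(2^{−n};θ)| → +∞ as n → ∞. Consequently, since U(0;θ) = 0, the limit lim_{y → 0+} (1/y) U(y;θ) does not exist (as a finite number), i.e. the function y ↦ U(y;θ) has no right derivative at y = 0. -/
open Real Filter

/-!
Substituting `k = n - 1 - i` in the series for `u₂(x, 2⁻ⁿ)`, whose terms vanish for `k ≥ n`, gives
`2^{αn} u₂(x, 2⁻ⁿ) = ∑_{i < n} cᵢ cos (2ⁿ sᵢ x)` with `sᵢ = π / 2^{i+1}` and coefficients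
`cᵢ = 2^{α(i+1)} sin sᵢ` that do not depend on `n` and are summable when `α < 1`. By the
Riemann–Lebesgue lemma the cosines become orthogonal with respect to `θ` in the limit, so that
`2^{2αn} U(2⁻ⁿ; θ) → (∑ cᵢ²) · (∫₀¹ θ) / 2 ≠ 0`. For `α < 1/2` the factor `2^{(1-2α)n}` makes
`2ⁿ |U(2⁻ⁿ; θ)|` diverge.
-/

open MeasureTheory Bornology
open scoped Topology FourierTransform

theorem tendsto_sum_of_dominated_convergence {κ ι G : Type*} [NormedAddCommGroup G]
    [CompleteSpace G] {l : Filter κ} {f : κ → ι → G} {g : ι → G} {bound : ι → ℝ}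
    {t : κ → Finset ι} (ht : Tendsto t l atTop) (hbound : Summable bound)
    (hf : ∀ i, Tendsto (f · i) l (𝓝 (g i))) (hfb : ∀ n i, ‖f n i‖ ≤ bound i) :
    Tendsto (fun n => ∑ i ∈ t n, f n i) l (𝓝 (∑' i, g i)) := by
  simp only [sum_eq_tsum_indicator (L := .unconditional ι)]
  refine tendsto_tsum_of_dominated_convergence hbound (fun i => ?_)
    (Eventually.of_forall fun n i => (norm_indicator_le_norm_self _ _).trans (hfb n i))
  refine (hf i).congr' ?_
  filter_upwards [ht.eventually_ge_atTop {i}] with n hn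
  exact (Set.indicator_of_mem (Finset.singleton_subset_iff.mp hn) _).symm

theorem summable_sq_of_summable_norm {ι R : Type*} [NormedRing R] [CompleteSpace R] {c : ι → R}
    (hc : Summable (‖c ·‖)) : Summable fun i => c i ^ 2 := by
  simpa only [sq] using! (summable_mul_of_summable_norm hc hc).comp_injective
    Function.diag_injective

section RiemannLebesgue

variable {μ : Measure ℝ} {f : ℝ → ℝ}

theorem integrable_cos_mul (hf : Integrable f μ) (w : ℝ) :
    Integrable (fun x => cos (w * x) * f x) μ :=
  hf.bdd_mul (by fun_prop) (Eventually.of_forall fun x => abs_cos_le_one (w * x))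

theorem tendsto_integral_cos_mul_cobounded (hf : Integrable f) :
    Tendsto (fun w => ∫ x, cos (w * x) * f x) (cobounded ℝ) (𝓝 0) := by
  have hscale : Tendsto (fun w : ℝ => w * (2 * π)⁻¹) (cobounded ℝ) (cocompact ℝ) :=
    Metric.cobounded_eq_cocompact (α := ℝ) ▸ tendsto_mul_right_cobounded (by positivity)
  have hre := (Complex.continuous_re.tendsto 0).comp
    ((Real.tendsto_integral_exp_smul_cocompact fun x => (f x : ℂ)).comp hscale)
  refine hre.congr fun w => ?_
  have hint : Integrable fun x => 𝐞 (-(x * (w * (2 * π)⁻¹))) • (f x : ℂ) := by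
    simpa [mul_comm] using (fourierIntegral_convergent_iff (w * (2 * π)⁻¹)).mpr hf.ofReal
  refine (integral_re hint).symm.trans (integral_congr_ae (Eventually.of_forall fun x => ?_))
  have hphase : 2 * π * -(x * (w * (2 * π)⁻¹)) = -(w * x) := by field_simp
  change (𝐞 (-(x * (w * (2 * π)⁻¹))) • (f x : ℂ)).re = cos (w * x) * f x
  rw [Circle.smul_def, fourierChar_apply, hphase, smul_eq_mul, Complex.re_mul_ofReal,
    Complex.exp_ofReal_mul_I_re, cos_neg]

theorem integral_cos_mul_cos_mul (hf : Integrable f μ) (u v : ℝ) :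
    ∫ x, cos (u * x) * cos (v * x) * f x ∂μ =
      ((∫ x, cos ((u - v) * x) * f x ∂μ) + ∫ x, cos ((u + v) * x) * f x ∂μ) / 2 := by
  rw [← integral_add (integrable_cos_mul hf _) (integrable_cos_mul hf _), ← integral_div]
  congr 1 with x
  rw [sub_mul, add_mul]
  linear_combination f x / 2 * two_mul_cos_mul_cos (u * x) (v * x)

theorem tendsto_integral_cos_mul_cos_mul_cobounded (hf : Integrable f) {s t : ℝ} (hs : 0 < s)
    (ht : 0 < t) :
    Tendsto (fun w => ∫ x, cos (w * s * x) * cos (w * t * x) * f x) (cobounded ℝ)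
      (𝓝 (if s = t then (∫ x, f x) / 2 else 0)) := by
  have hlim {r : ℝ} (hr : r ≠ 0) :
      Tendsto (fun w => ∫ x, cos (w * r * x) * f x) (cobounded ℝ) (𝓝 0) :=
    (tendsto_integral_cos_mul_cobounded hf).comp (tendsto_mul_right_cobounded hr)
  simp only [integral_cos_mul_cos_mul hf, ← mul_sub, ← mul_add]
  split_ifs with hst
  · simpa [hst] using ((hlim (add_pos hs ht).ne').const_add (∫ x, f x)).div_const 2
  · simpa using ((hlim (sub_ne_zero.mpr hst)).add (hlim (add_pos hs ht).ne')).div_const 2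

theorem abs_integral_cos_mul_cos_mul_le (hf : Integrable f μ) (u v : ℝ) :
    |∫ x, cos (u * x) * cos (v * x) * f x ∂μ| ≤ ∫ x, |f x| ∂μ := by
  rw [← norm_eq_abs]
  refine norm_integral_le_of_norm_le hf.abs (Eventually.of_forall fun x => ?_)
  rw [norm_mul, norm_mul]
  exact mul_le_of_le_one_left (norm_nonneg _)
    (mul_le_one₀ (abs_cos_le_one _) (norm_nonneg _) (abs_cos_le_one _))

theorem integral_sum_cos_sq_mul (hf : Integrable f μ) {ι : Type*} (t : Finset ι) (c u : ι → ℝ) :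
    ∫ x, (∑ i ∈ t, c i * cos (u i * x)) ^ 2 * f x ∂μ =
      ∑ p ∈ t ×ˢ t, c p.1 * c p.2 * ∫ x, cos (u p.1 * x) * cos (u p.2 * x) * f x ∂μ := by
  have hint (p : ι × ι) : Integrable (fun x => cos (u p.1 * x) * cos (u p.2 * x) * f x) μ := by
    simpa only [mul_assoc] using integrable_cos_mul (integrable_cos_mul hf (u p.2)) (u p.1)
  simp only [← integral_const_mul]
  rw [← integral_finsetSum _ fun p _ => (hint p).const_mul _]
  congr 1 with x
  rw [sq, Finset.sum_mul_sum, ← Finset.sum_product', Finset.sum_mul]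
  exact Finset.sum_congr rfl fun p _ => by ring

theorem tendsto_integral_sum_cos_sq_mul {κ ι : Type*} {l : Filter κ} {c s : ι → ℝ}
    (hf : Integrable f) (hc : Summable c) (hs : ∀ i, 0 < s i) (hinj : Function.Injective s)
    {w : κ → ℝ} (hw : Tendsto w l (cobounded ℝ)) {t : κ → Finset ι} (ht : Tendsto t l atTop) :
    Tendsto (fun n => ∫ x, (∑ i ∈ t n, c i * cos (w n * s i * x)) ^ 2 * f x) l
      (𝓝 ((∑' i, c i ^ 2) * ((∫ x, f x) / 2))) := by
  have htt : Tendsto (fun n => t n ×ˢ t n) l atTop := by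
    refine tendsto_finsetProd_atTop.comp (f := fun n => (t n, t n)) ?_
    rw [← prod_atTop_atTop_eq]
    exact ht.prodMk ht
  have hdiag : ∑' p : ι × ι, c p.1 * c p.2 * (if s p.1 = s p.2 then (∫ x, f x) / 2 else 0) =
      (∑' i, c i ^ 2) * ((∫ x, f x) / 2) := by
    rw [← Function.diag_injective.tsum_eq, ← tsum_mul_right]
    · simp only [Function.diag, if_true, ← sq]
    · intro p hp
      refine ⟨p.1, Prod.ext rfl (by_contra fun hne => hp ?_)⟩
      exact mul_eq_zero_of_right _ (if_neg (hinj.ne hne))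
  simp only [integral_sum_cos_sq_mul hf]
  rw [← hdiag]
  refine tendsto_sum_of_dominated_convergence htt
    ((hc.norm.mul_norm hc.norm).mul_right (∫ x, |f x|)) (fun p => ?_) (fun n p => ?_)
  · exact ((tendsto_integral_cos_mul_cos_mul_cobounded hf (hs p.1) (hs p.2)).comp hw).const_mul _
  · rw [norm_mul]
    gcongr
    exact abs_integral_cos_mul_cos_mul_le hf _ _

end RiemannLebesgue

/-- The coefficients `2^{α(i+1)} sin (π / 2^{i+1})` of the rescaled profile `2^{αn} u₂(·, 2⁻ⁿ)`,
where `i = n - 1 - k` counts the frequencies `2^k π` downwards from the highest active one. -/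
noncomputable def weierstrassCoeff (α : ℝ) (i : ℕ) : ℝ :=
  2 ^ (α * (i + 1)) * sin (π / 2 ^ (i + 1))

theorem weierstrassCoeff_zero (α : ℝ) : weierstrassCoeff α 0 = 2 ^ α := by
  simp [weierstrassCoeff]

theorem abs_weierstrassCoeff_le (α : ℝ) (i : ℕ) :
    |weierstrassCoeff α i| ≤ π * ((2 : ℝ) ^ (α - 1)) ^ (i + 1) := by
  have hsin : |sin (π / 2 ^ (i + 1))| ≤ π / 2 ^ (i + 1) :=
    abs_sin_le_abs.trans_eq (abs_of_pos (by positivity))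
  calc |weierstrassCoeff α i|
      = 2 ^ (α * (i + 1)) * |sin (π / 2 ^ (i + 1))| := by
        rw [weierstrassCoeff, abs_mul, abs_of_pos (by positivity)]
    _ ≤ 2 ^ (α * (i + 1)) * (π / 2 ^ (i + 1)) := by gcongr
    _ = π * ((2 : ℝ) ^ (α - 1)) ^ (i + 1) := by
        rw [rpow_sub_one two_ne_zero, div_pow, ← rpow_mul_natCast zero_le_two]
        push_cast
        ring

theorem summable_weierstrassCoeff {α : ℝ} (hα : α < 1) : Summable (weierstrassCoeff α) := by
  have hgeom : Summable fun i : ℕ => ((2 : ℝ) ^ (α - 1)) ^ i :=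
    summable_geometric_of_lt_one (by positivity)
      (rpow_lt_one_of_one_lt_of_neg one_lt_two (by linarith))
  exact (((summable_nat_add_iff 1).mpr hgeom).mul_left π).of_norm_bounded
    (abs_weierstrassCoeff_le α)

theorem tsum_weierstrassCoeff_sq_pos {α : ℝ} (hα : α < 1) :
    0 < ∑' i, weierstrassCoeff α i ^ 2 := by
  refine Summable.tsum_pos ?_ (fun i => sq_nonneg _) 0 ?_
  · exact summable_sq_of_summable_norm (summable_weierstrassCoeff hα).norm
  · rw [weierstrassCoeff_zero]
    positivity

theorem weierstrassU2_two_rpow_neg (α x : ℝ) (n : ℕ) :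
    weierstrassU2 α x (2 ^ (-(n : ℝ))) = ∑ k ∈ Finset.range n,
      2 ^ (-(α * k)) * cos (2 ^ k * π * x) * sin (2 ^ k * π * 2 ^ (-(n : ℝ))) := by
  refine tsum_eq_sum fun k hk => ?_
  obtain ⟨d, rfl⟩ := Nat.exists_eq_add_of_le (not_lt.mp (Finset.mem_range.not.mp hk))
  have hangle : (2 : ℝ) ^ (n + d) * π * 2 ^ (-(n : ℝ)) = ((2 ^ d : ℕ) : ℝ) * π := by
    rw [rpow_neg zero_le_two, rpow_natCast, pow_add]
    push_cast
    field_simp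
  rw [hangle, sin_nat_mul_pi, mul_zero]

theorem two_rpow_mul_weierstrassU2_two_rpow_neg (α x : ℝ) (n : ℕ) :
    2 ^ (α * n) * weierstrassU2 α x (2 ^ (-(n : ℝ))) =
      ∑ i ∈ Finset.range n, weierstrassCoeff α i * cos (2 ^ n * (π / 2 ^ (i + 1)) * x) := by
  rw [weierstrassU2_two_rpow_neg, Finset.mul_sum, ← Finset.sum_range_reflect]
  refine Finset.sum_congr rfl fun i hi => ?_
  obtain ⟨k, rfl⟩ := Nat.exists_eq_add_of_lt (Finset.mem_range.mp hi)
  have hfreq : (2 : ℝ) ^ (i + k + 1) * (π / 2 ^ (i + 1)) = 2 ^ k * π := by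
    field_simp
    ring
  have hangle : (2 : ℝ) ^ k * π * 2 ^ (-((i + k + 1 : ℕ) : ℝ)) = π / 2 ^ (i + 1) := by
    rw [rpow_neg zero_le_two, rpow_natCast]
    field_simp
    ring
  have hamp : (2 : ℝ) ^ (α * (i + k + 1 : ℕ)) * 2 ^ (-(α * k)) = 2 ^ (α * (i + 1)) := by
    rw [← rpow_add two_pos]
    push_cast
    ring_nf
  rw [show i + k + 1 - 1 - i = k by omega, hfreq, hangle, weierstrassCoeff, ← hamp]
  ring

theorem tendsto_two_rpow_mul_weierstrassU {α : ℝ} (hα : α < 1) {θ : ℝ → ℝ}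
    (hθ : IntervalIntegrable θ volume 0 1) :
    Tendsto (fun n : ℕ => 2 ^ (2 * α * n) * weierstrassU α θ (2 ^ (-(n : ℝ)))) atTop
      (𝓝 ((∑' i, weierstrassCoeff α i ^ 2) * ((∫ x in (0 : ℝ)..1, θ x) / 2))) := by
  have hf : Integrable ((Set.Ioc 0 1).indicator θ) :=
    (integrable_indicator_iff measurableSet_Ioc).mpr
      ((intervalIntegrable_iff_integrableOn_Ioc_of_le zero_le_one).mp hθ)
  have hpow : Tendsto (fun n : ℕ => (2 : ℝ) ^ n) atTop (cobounded ℝ) :=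
    (tendsto_pow_atTop_atTop_of_one_lt one_lt_two).mono_right
      IsOrderBornology.atTop_le_cobounded
  have hinj : Function.Injective fun i : ℕ => π / 2 ^ (i + 1) := by
    refine (strictAnti_nat_of_succ_lt fun i => ?_).injective
    gcongr
    · exact one_lt_two
    · exact Nat.lt_succ_self _
  have hlim := tendsto_integral_sum_cos_sq_mul hf (summable_weierstrassCoeff hα)
    (fun i => by positivity) hinj hpow tendsto_finset_range
  simp only [intervalIntegral.integral_of_le zero_le_one, ← integral_indicator measurableSet_Ioc]
  refine hlim.congr fun n => ?_
  rw [weierstrassU, intervalIntegral.integral_of_le zero_le_one,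
    ← integral_indicator measurableSet_Ioc, ← integral_const_mul]
  congr 1 with x
  rw [← two_rpow_mul_weierstrassU2_two_rpow_neg, Set.indicator_mul_right,
    mul_pow, ← rpow_mul_natCast zero_le_two]
  push_cast
  ring_nf

theorem tendsto_two_pow_mul_abs_weierstrassU {α : ℝ} (hα : α < 1 / 2) {θ : ℝ → ℝ}
    (hθ : IntervalIntegrable θ volume 0 1) (hmean : (∫ x in (0 : ℝ)..1, θ x) ≠ 0) :
    Tendsto (fun n : ℕ => (2 : ℝ) ^ n * |weierstrassU α θ (2 ^ (-(n : ℝ)))|) atTop atTop := by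
  have hα1 : α < 1 := by linarith
  have hgrow : Tendsto (fun n : ℕ => ((2 : ℝ) ^ (1 - 2 * α)) ^ n) atTop atTop :=
    tendsto_pow_atTop_atTop_of_one_lt (one_lt_rpow one_lt_two (by linarith))
  have hlimit : 0 < |(∑' i, weierstrassCoeff α i ^ 2) * ((∫ x in (0 : ℝ)..1, θ x) / 2)| :=
    abs_pos.mpr (mul_ne_zero (tsum_weierstrassCoeff_sq_pos hα1).ne'
      (div_ne_zero hmean two_ne_zero))
  refine (hgrow.atTop_mul_pos hlimit (tendsto_two_rpow_mul_weierstrassU hα1 hθ).abs).congr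
    fun n => ?_
  have hsplit : ((2 : ℝ) ^ (1 - 2 * α)) ^ n * 2 ^ (2 * α * n) = 2 ^ n := by
    rw [← rpow_mul_natCast zero_le_two, ← rpow_add two_pos, ← rpow_natCast]
    ring_nf
  rw [abs_mul, abs_of_pos (by positivity), ← mul_assoc, hsplit]

theorem tendsto_two_rpow_neg_nhdsGT_zero :
    Tendsto (fun n : ℕ => (2 : ℝ) ^ (-(n : ℝ))) atTop (𝓝[>] 0) := by
  simp only [rpow_neg zero_le_two, rpow_natCast]
  exact tendsto_inv_atTop_nhdsGT_zero.comp (tendsto_pow_atTop_atTop_of_one_lt one_lt_two)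

theorem weierstrassU_no_rightDeriv_general {α : ℝ} (hα : α < 1 / 2) {θ : ℝ → ℝ}
    (hθ : IntervalIntegrable θ volume 0 1) (hmean : (∫ x in (0 : ℝ)..1, θ x) ≠ 0) :
    Tendsto (fun n : ℕ => (2 : ℝ) ^ n * |weierstrassU α θ ((2 : ℝ) ^ (-(n : ℝ)))|) atTop atTop
    ∧ ¬∃ L : ℝ, Tendsto (fun y => weierstrassU α θ y / y) (𝓝[>] 0) (𝓝 L) := by
  have hgrow := tendsto_two_pow_mul_abs_weierstrassU hα hθ hmean
  refine ⟨hgrow, fun ⟨L, hL⟩ => ?_⟩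
  have hquot := (hL.comp tendsto_two_rpow_neg_nhdsGT_zero).abs
  refine not_tendsto_nhds_of_tendsto_atTop hgrow |L| (hquot.congr fun n => ?_)
  rw [Function.comp_apply, abs_div, abs_of_pos (rpow_pos_of_pos two_pos _),
    rpow_neg zero_le_two, rpow_natCast, div_inv_eq_mul, mul_comm]

/-- For `0 < α < 1/2` and a smooth `1`-periodic `θ` with nonzero mean, `2^n |U(2^{−n};θ)| → +∞`;
consequently `U(·;θ)` has no (finite) right derivative at `y = 0`. -/
theorem weierstrassU_no_rightDeriv (α : ℝ) (h1 : 0 < α) (h2 : α < 1 / 2)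
    (θ : ℝ → ℝ) (hθ : ContDiff ℝ (⊤ : ℕ∞) θ) (hper : Function.Periodic θ 1)
    (hmean : (∫ x in (0 : ℝ)..1, θ x) ≠ 0) :
    Tendsto (fun n : ℕ => (2 : ℝ) ^ n * |weierstrassU α θ ((2 : ℝ) ^ (-(n : ℝ)))|) atTop atTop
    ∧ ¬∃ L : ℝ, Tendsto (fun y => weierstrassU α θ y / y) (nhdsWithin 0 (Set.Ioi 0)) (nhds L) :=
  weierstrassU_no_rightDeriv_general h2 (hθ.continuous.intervalIntegrable 0 1) hmean
end

section
/- Let 1/2 < α ≤ 1 and let θ : ℝ → ℝ be a smooth 1-periodic function. Then lim_{y → 0+} (1/y) U(y;θ) = 0; that is, for any Hölder exponent strictly greater than 1/2 the right derivative of y ↦ ∫_0^1 u₂(x,y)² θ(x) dx at y = 0 exists and vanishes. -/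
/-!
Since `|sin t| ≤ |t| ^ s` for `0 ≤ s ≤ 1`, the `k`-th term of `u₂` is at most
`|π y| ^ s * (2 ^ (s - α)) ^ k`; for `s < α` these bounds form a convergent geometric series, so
`u₂(x, y) = O(|y| ^ s)` uniformly in `x`. Squaring and integrating gives
`U(y; θ) = O(|y| ^ (2 * s))`, and `α > 1 / 2` leaves room for an `s` with `2 * s > 1`.
-/

open Real Filter

open Asymptotics MeasureTheory Topology

theorem abs_sin_le_abs_rpow {s : ℝ} (hs₀ : 0 ≤ s) (hs₁ : s ≤ 1) (t : ℝ) : |sin t| ≤ |t| ^ s := by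
  rcases le_total |t| 1 with ht | ht
  · calc |sin t| ≤ |t| := abs_sin_le_abs
      _ = |t| ^ (1 : ℝ) := (rpow_one _).symm
      _ ≤ |t| ^ s := rpow_le_rpow_of_exponent_ge' (abs_nonneg t) ht hs₀ hs₁
  · exact (abs_sin_le_one t).trans (one_le_rpow ht hs₀)

theorem hasDerivAt_zero_of_isBigO_abs_rpow {F : Type*} [NormedAddCommGroup F] [NormedSpace ℝ F]
    {f : ℝ → F} {x₀ p : ℝ} (hp : 1 < p) (hf : f =O[𝓝 x₀] fun x => |x - x₀| ^ p) :
    HasDerivAt f 0 x₀ := by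
  have hp₀ : p ≠ 0 := by linarith
  have hf₀ : f x₀ = 0 := by
    obtain ⟨C, hC⟩ := hf.bound
    simpa [zero_rpow hp₀] using hC.self_of_nhds
  have hlittle : (fun x => |x - x₀| ^ p) =o[𝓝 x₀] fun x => x - x₀ := by
    simpa [hasDerivAt_iff_isLittleO, zero_rpow hp₀] using
      (hasDerivAt_abs_rpow (x₀ - x₀) hp).comp_sub_const x₀ x₀
  simpa [hasDerivAt_iff_isLittleO, hf₀] using hf.trans_isLittleO hlittle

theorem norm_weierstrassU2_term_le {s : ℝ} (hs₀ : 0 ≤ s) (hs₁ : s ≤ 1) (α x y : ℝ) (k : ℕ) :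
    ‖(2 : ℝ) ^ (-(α * (k : ℝ))) * cos (2 ^ k * π * x) * sin (2 ^ k * π * y)‖ ≤
      |π * y| ^ s * ((2 : ℝ) ^ (s - α)) ^ k := by
  have hpow : ((2 : ℝ) ^ k) ^ s = 2 ^ (s * k) := by
    rw [← rpow_natCast, ← rpow_mul zero_le_two, mul_comm]
  calc _ = (2 : ℝ) ^ (-(α * k)) * |cos (2 ^ k * π * x)| * |sin (2 ^ k * π * y)| := by
        rw [norm_mul, norm_mul, norm_of_nonneg (by positivity), norm_eq_abs, norm_eq_abs]
    _ ≤ 2 ^ (-(α * k)) * 1 * |2 ^ k * π * y| ^ s := by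
        gcongr
        · exact abs_cos_le_one _
        · exact abs_sin_le_abs_rpow hs₀ hs₁ _
    _ = |π * y| ^ s * (2 ^ (-(α * k)) * 2 ^ (s * k)) := by
        rw [mul_assoc (2 ^ k), abs_mul, abs_of_pos (by positivity : (0 : ℝ) < 2 ^ k),
          mul_rpow (by positivity) (abs_nonneg _), hpow]
        ring
    _ = |π * y| ^ s * (2 ^ (s - α)) ^ k := by
        rw [← rpow_add two_pos, ← rpow_mul_natCast zero_le_two]
        ring_nf

section

variable {α s : ℝ} {θ : ℝ → ℝ}

theorem abs_weierstrassU2_le (hs₀ : 0 ≤ s) (hs₁ : s ≤ 1) (hsα : s < α) (x y : ℝ) :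
    |weierstrassU2 α x y| ≤ |π * y| ^ s * (1 - (2 : ℝ) ^ (s - α))⁻¹ :=
  have hratio : (2 : ℝ) ^ (s - α) < 1 := rpow_lt_one_of_one_lt_of_neg one_lt_two (sub_neg.2 hsα)
  tsum_of_norm_bounded ((hasSum_geometric_of_lt_one (by positivity) hratio).mul_left _)
    (norm_weierstrassU2_term_le hs₀ hs₁ α x y)

theorem abs_weierstrassU_le (hs₀ : 0 ≤ s) (hs₁ : s ≤ 1) (hsα : s < α)
    (hθ : IntervalIntegrable θ volume 0 1) (y : ℝ) :
    |weierstrassU α θ y| ≤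
      (|π * y| ^ s * (1 - (2 : ℝ) ^ (s - α))⁻¹) ^ 2 * ∫ x in (0 : ℝ)..1, |θ x| := by
  rw [weierstrassU, ← norm_eq_abs, ← intervalIntegral.integral_const_mul]
  refine intervalIntegral.norm_integral_le_of_norm_le zero_le_one (ae_of_all _ fun x _ => ?_)
    (hθ.abs.const_mul _)
  rw [norm_mul, norm_pow, norm_eq_abs, norm_eq_abs]
  gcongr
  exact abs_weierstrassU2_le hs₀ hs₁ hsα x y

theorem weierstrassU_isBigO_abs_rpow (hs₀ : 0 ≤ s) (hs₁ : s ≤ 1) (hsα : s < α)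
    (hθ : IntervalIntegrable θ volume 0 1) (l : Filter ℝ) :
    weierstrassU α θ =O[l] fun y => |y| ^ (2 * s) := by
  refine .of_bound ((π ^ s * (1 - (2 : ℝ) ^ (s - α))⁻¹) ^ 2 * ∫ x in (0 : ℝ)..1, |θ x|)
    (.of_forall fun y => (abs_weierstrassU_le hs₀ hs₁ hsα hθ y).trans_eq ?_)
  rw [norm_of_nonneg (by positivity), abs_mul, abs_of_pos pi_pos,
    mul_rpow pi_pos.le (abs_nonneg y), mul_comm 2 s, rpow_mul (abs_nonneg y),
    rpow_two]
  ring

end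

theorem weierstrassU_highHolder_rightDeriv_general {α : ℝ} (hα : 1 / 2 < α) {θ : ℝ → ℝ}
    (hθ : IntervalIntegrable θ volume 0 1) : HasDerivAt (weierstrassU α θ) 0 0 := by
  obtain ⟨s, hs, hsmin⟩ := exists_between (lt_min hα one_half_lt_one)
  obtain ⟨hsα, hs₁⟩ := lt_min_iff.1 hsmin
  refine hasDerivAt_zero_of_isBigO_abs_rpow (p := 2 * s) (by linarith) ?_
  simpa only [sub_zero] using weierstrassU_isBigO_abs_rpow (by linarith) hs₁.le hsα hθ (𝓝 0)

/-- For `1/2 < α ≤ 1` and any smooth `1`-periodic `θ`, the right derivative of `U(·;θ)` at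
`y = 0` exists and vanishes: `lim_{y→0+} U(y;θ)/y = 0`. -/
theorem weierstrassU_highHolder_rightDeriv (α : ℝ) (h1 : 1 / 2 < α) (h2 : α ≤ 1)
    (θ : ℝ → ℝ) (hθ : ContDiff ℝ (⊤ : ℕ∞) θ) (hper : Function.Periodic θ 1) :
    Tendsto (fun y => weierstrassU α θ y / y) (nhdsWithin 0 (Set.Ioi 0)) (nhds 0) := by
  simpa [weierstrassU, weierstrassU2, div_eq_inv_mul] using
    (weierstrassU_highHolder_rightDeriv_general h1
      (hθ.continuous.intervalIntegrable 0 1)).tendsto_slope_zero_right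
end

section
/- Let 0 < α < 1/2 and let y₁ = j/2^m be a dyadic rational with integers m ≥ 1 and 1 ≤ j ≤ 2^m − 1. Then for the function S(y) = ∑_{k=0}^∞ 2^{−2αk} sin²(2^k π y) one has 2^n ( S(y₁ + 2^{−n}) − S(y₁) ) → +∞ as n → ∞. -/
open Real Filter

/-- `S(y) = ∑_{k=0}^∞ 2^{−2αk} sin²(2^k π y)`. -/
noncomputable def resonantS (α y : ℝ) : ℝ :=
  ∑' k : ℕ, (2 : ℝ) ^ (-(2 * α * (k : ℝ))) * Real.sin (2 ^ k * π * y) ^ 2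

/-!
At a dyadic point `j / 2 ^ m` every term of the series of index `k ≥ m` vanishes. A displacement by
`1 / 2 ^ (n + 1)`, with `n ≥ m`, makes the `n`-th sine equal to `±1`, so that this term alone
contributes its full weight `a n`. The other terms of index `≥ m` can only increase, and the `m`
terms of lower index, being Lipschitz, lose `O(1 / 2 ^ (n + 1))`. After multiplication by
`2 ^ (n + 1)` the gain is `2 * (2 ^ n * a n)` against a bounded loss, and for
`a n = 2 ^ (-2 α n)` with `α < 1 / 2` the gain is unbounded.
-/

theorem abs_sin_sq_sub_sin_sq_le (x y : ℝ) : |sin x ^ 2 - sin y ^ 2| ≤ |x - y| :=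
  calc |sin x ^ 2 - sin y ^ 2| = |cos (2 * y) - cos (2 * x)| / 2 := by
        rw [sin_sq_eq_half_sub, sin_sq_eq_half_sub, sub_sub_sub_cancel_left, ← sub_div, abs_div,
          abs_two]
    _ ≤ |2 * y - 2 * x| / 2 :=
        div_le_div_of_nonneg_right (abs_cos_sub_cos_le _ _) zero_le_two
    _ = |x - y| := by
        rw [← mul_sub, abs_mul, abs_two, mul_div_cancel_left₀ _ two_ne_zero, abs_sub_comm]

theorem sin_two_pow_mul_pi_mul_dyadic {m k : ℕ} (hmk : m ≤ k) (j : ℤ) :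
    sin (2 ^ k * π * (j / 2 ^ m)) = 0 := by
  obtain ⟨p, rfl⟩ := Nat.exists_eq_add_of_le hmk
  have h_arg : (2 : ℝ) ^ (m + p) * π * (j / 2 ^ m) = (2 ^ p * j : ℤ) * π := by
    push_cast
    field_simp
    ring
  rw [h_arg, sin_int_mul_pi]

theorem dyadic_add_one_div_two_pow {m n : ℕ} (hmn : m ≤ n) (j : ℤ) :
    (j / 2 ^ m + 1 / 2 ^ n : ℝ) = (j * 2 ^ (n - m) + 1 : ℤ) / 2 ^ n := by
  obtain ⟨p, rfl⟩ := Nat.exists_eq_add_of_le hmn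
  rw [Nat.add_sub_cancel_left]
  push_cast
  field_simp
  ring

theorem sin_sq_two_pow_mul_pi_mul_dyadic_add {m n : ℕ} (hmn : m ≤ n) (j : ℤ) :
    sin (2 ^ n * π * (j / 2 ^ m + 1 / 2 ^ (n + 1))) ^ 2 = 1 := by
  have h_shift : (2 : ℝ) ^ n * π * (1 / 2 ^ (n + 1)) = π / 2 := by
    field_simp
    ring
  have h_sin := sin_two_pow_mul_pi_mul_dyadic hmn j
  rw [mul_add, h_shift, sin_add_pi_div_two, cos_sq', h_sin]
  norm_num

/-- The series `∑ a k * sin² (2 ^ k π y)` with arbitrary weights `a`; `resonantS α` is the case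
`a k = 2 ^ (-2 α k)`. As it is a `tsum`, its value is `0` where it diverges; at dyadic points it
has only finitely many nonzero terms. -/
noncomputable def dyadicSineSeries (a : ℕ → ℝ) (y : ℝ) : ℝ :=
  ∑' k : ℕ, a k * sin (2 ^ k * π * y) ^ 2

section dyadicSineSeries

variable {a : ℕ → ℝ} {m n : ℕ}

theorem dyadicSineSeries_dyadic (a : ℕ → ℝ) (hmn : m ≤ n) (j : ℤ) :
    dyadicSineSeries a (j / 2 ^ m) =
      ∑ k ∈ Finset.range n, a k * sin (2 ^ k * π * (j / 2 ^ m)) ^ 2 := by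
  refine tsum_eq_sum fun k hk => ?_
  have hmk : m ≤ k := hmn.trans (by simpa using hk)
  simp [sin_two_pow_mul_pi_mul_dyadic hmk j]

theorem dyadicSineSeries_dyadic_add_sub (a : ℕ → ℝ) (hmn : m ≤ n) (j : ℤ) :
    dyadicSineSeries a (j / 2 ^ m + 1 / 2 ^ n) - dyadicSineSeries a (j / 2 ^ m) =
      ∑ k ∈ Finset.range n, a k *
        (sin (2 ^ k * π * (j / 2 ^ m + 1 / 2 ^ n)) ^ 2 - sin (2 ^ k * π * (j / 2 ^ m)) ^ 2) := by
  rw [dyadicSineSeries_dyadic a hmn, dyadic_add_one_div_two_pow hmn,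
    dyadicSineSeries_dyadic a le_rfl, ← Finset.sum_sub_distrib]
  simp only [mul_sub]

theorem neg_le_sum_mul_sin_sq_sub_sin_sq (s : Finset ℕ) (ha : ∀ k ∈ s, 0 ≤ a k) (y h : ℝ) :
    -((∑ k ∈ s, a k * (2 ^ k * π)) * |h|) ≤
      ∑ k ∈ s, a k * (sin (2 ^ k * π * (y + h)) ^ 2 - sin (2 ^ k * π * y) ^ 2) := by
  rw [Finset.sum_mul, ← Finset.sum_neg_distrib]
  refine Finset.sum_le_sum fun k hk => ?_
  have h_lip : |sin (2 ^ k * π * (y + h)) ^ 2 - sin (2 ^ k * π * y) ^ 2| ≤ 2 ^ k * π * |h| :=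
    calc _ ≤ |2 ^ k * π * (y + h) - 2 ^ k * π * y| := abs_sin_sq_sub_sin_sq_le _ _
      _ = 2 ^ k * π * |h| := by
        rw [← mul_sub, add_sub_cancel_left, abs_mul, abs_of_pos (by positivity)]
  rw [mul_assoc, ← mul_neg]
  exact mul_le_mul_of_nonneg_left (neg_le_of_abs_le h_lip) (ha k hk)

theorem le_sum_Ico_mul_sin_sq_sub_sin_sq (ha : ∀ k, 0 ≤ a k) (hmn : m ≤ n) (j : ℤ) :
    a n ≤ ∑ k ∈ Finset.Ico m (n + 1), a k *
      (sin (2 ^ k * π * (j / 2 ^ m + 1 / 2 ^ (n + 1))) ^ 2 -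
        sin (2 ^ k * π * (j / 2 ^ m)) ^ 2) := by
  have h_gain : ∀ k ∈ Finset.Ico m (n + 1),
      a k * (sin (2 ^ k * π * (j / 2 ^ m + 1 / 2 ^ (n + 1))) ^ 2 -
        sin (2 ^ k * π * (j / 2 ^ m)) ^ 2) =
      a k * sin (2 ^ k * π * (j / 2 ^ m + 1 / 2 ^ (n + 1))) ^ 2 := fun k hk => by
    rw [sin_two_pow_mul_pi_mul_dyadic (Finset.mem_Ico.mp hk).1, zero_pow two_ne_zero, sub_zero]
  rw [Finset.sum_congr rfl h_gain]
  calc a n = a n * sin (2 ^ n * π * (j / 2 ^ m + 1 / 2 ^ (n + 1))) ^ 2 := by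
        rw [sin_sq_two_pow_mul_pi_mul_dyadic_add hmn, mul_one]
    _ ≤ _ := Finset.single_le_sum
        (f := fun k => a k * sin (2 ^ k * π * (j / 2 ^ m + 1 / 2 ^ (n + 1))) ^ 2)
        (fun k _ => mul_nonneg (ha k) (sq_nonneg _))
        (Finset.mem_Ico.mpr ⟨hmn, n.lt_succ_self⟩)

theorem sub_le_dyadicSineSeries_dyadic_add_sub (ha : ∀ k, 0 ≤ a k) (hmn : m ≤ n) (j : ℤ) :
    a n - (∑ k ∈ Finset.range m, a k * (2 ^ k * π)) * (1 / 2 ^ (n + 1)) ≤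
      dyadicSineSeries a (j / 2 ^ m + 1 / 2 ^ (n + 1)) - dyadicSineSeries a (j / 2 ^ m) := by
  have h_head := neg_le_sum_mul_sin_sq_sub_sin_sq (Finset.range m) (fun k _ => ha k)
    (j / 2 ^ m) (1 / 2 ^ (n + 1))
  rw [abs_of_pos (by positivity)] at h_head
  rw [dyadicSineSeries_dyadic_add_sub a (hmn.trans n.le_succ),
    ← Finset.sum_range_add_sum_Ico _ (hmn.trans n.le_succ)]
  linarith [le_sum_Ico_mul_sin_sq_sub_sin_sq ha hmn j]

theorem tendsto_two_pow_mul_dyadicSineSeries_dyadic_add_sub (ha : ∀ k, 0 ≤ a k)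
    (ha_top : Tendsto (fun n => 2 ^ n * a n) atTop atTop) (m : ℕ) (j : ℤ) :
    Tendsto (fun n : ℕ => 2 ^ n *
      (dyadicSineSeries a (j / 2 ^ m + 1 / 2 ^ n) - dyadicSineSeries a (j / 2 ^ m)))
      atTop atTop := by
  rw [← tendsto_add_atTop_iff_nat 1]
  have h_lower : Tendsto (fun n => 2 * (2 ^ n * a n) - ∑ k ∈ Finset.range m, a k * (2 ^ k * π))
      atTop atTop :=
    tendsto_atTop_add_const_right _ _ (ha_top.const_mul_atTop two_pos)
  refine tendsto_atTop_mono' _ ?_ h_lower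
  filter_upwards [eventually_ge_atTop m] with n hmn
  have h_expand (C : ℝ) :
      2 * (2 ^ n * a n) - C = 2 ^ (n + 1) * (a n - C * (1 / 2 ^ (n + 1))) := by
    field_simp
    ring
  rw [h_expand]
  exact mul_le_mul_of_nonneg_left (sub_le_dyadicSineSeries_dyadic_add_sub ha hmn j) (by positivity)

end dyadicSineSeries

theorem resonantS_eq_dyadicSineSeries (α : ℝ) :
    resonantS α = dyadicSineSeries fun k => 2 ^ (-(2 * α * (k : ℝ))) :=
  rfl

theorem tendsto_two_pow_mul_two_rpow_neg_atTop {α : ℝ} (hα : α < 1 / 2) :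
    Tendsto (fun n : ℕ => (2 : ℝ) ^ n * 2 ^ (-(2 * α * (n : ℝ)))) atTop atTop := by
  have h_eq (n : ℕ) : (2 : ℝ) ^ n * 2 ^ (-(2 * α * (n : ℝ))) = (2 ^ (1 - 2 * α)) ^ n := by
    rw [← rpow_natCast, ← rpow_natCast, ← rpow_add two_pos, ← rpow_mul zero_le_two]
    ring_nf
  simp only [h_eq]
  exact tendsto_pow_atTop_atTop_of_one_lt (one_lt_rpow one_lt_two (by linarith))

theorem resonantS_dyadic_blowup_general {α : ℝ} (hα : α < 1 / 2) (m : ℕ) (j : ℤ) :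
    Tendsto
      (fun n : ℕ => (2 : ℝ) ^ n *
        (resonantS α ((j : ℝ) / 2 ^ m + (2 : ℝ) ^ (-(n : ℝ))) - resonantS α ((j : ℝ) / 2 ^ m)))
      atTop atTop := by
  simp only [rpow_neg zero_le_two, rpow_natCast, ← one_div]
  rw [resonantS_eq_dyadicSineSeries]
  exact tendsto_two_pow_mul_dyadicSineSeries_dyadic_add_sub (fun k => by positivity)
    (tendsto_two_pow_mul_two_rpow_neg_atTop hα) m j

/-- For `0 < α < 1/2` and a dyadic rational `y₁ = j/2^m` (with `m ≥ 1`, `1 ≤ j ≤ 2^m − 1`),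
one has `2^n (S(y₁ + 2^{−n}) − S(y₁)) → +∞` as `n → ∞`. -/
theorem resonantS_dyadic_blowup (α : ℝ) (h1 : 0 < α) (h2 : α < 1 / 2)
    (m j : ℕ) (hm : 1 ≤ m) (hj1 : 1 ≤ j) (hj2 : j ≤ 2 ^ m - 1) :
    Tendsto
      (fun n : ℕ => (2 : ℝ) ^ n *
        (resonantS α ((j : ℝ) / 2 ^ m + (2 : ℝ) ^ (-(n : ℝ))) - resonantS α ((j : ℝ) / 2 ^ m)))
      atTop atTop := by
  simpa only [Int.cast_natCast] using resonantS_dyadic_blowup_general h2 m j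
end

section
/- For every α ∈ (0,1) and every real h with 0 < |h| ≤ 1, one has ∑_{k=0}^∞ 2^{−αk+1} |sin(2^{k−1} π h)| ≤ ( 2^{1−α}/(1 − 2^{−α}) + 2^{2−α} π/(2^{1−α} − 1) ) · |h|^α. -/
open Real Filter

/-!
Each term is bounded in two ways: by `2 * (2 ^ (-α)) ^ k`, since `|sin| ≤ 1`, and by
`π * |h| * (2 ^ (1 - α)) ^ k`, since `|sin x| ≤ |x|`. The first bound is summable and the second one
grows geometrically, so we cut the series at the first `n` with `1 ≤ 2 ^ n * |h|`. Each of the two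
geometric sums is then comparable to its term next to the cut, which is of order `|h| ^ α`. If
`1 ≤ |h|` the cut is at `n = 0` and only the first bound is needed. This yields the constant
`2 / (1 - a) + π * (r / (r - 1))` with `a = 2 ^ (-α)` and `r = 2 ^ (1 - α)`, which is at most
`2 * a / (1 - a) + 2 * r * π / (r - 1)` because `2 ≤ π`.
-/

section WeightedSeries

variable {a M : ℝ} {f : ℕ → ℝ}

theorem summable_pow_mul_of_le (ha₀ : 0 ≤ a) (ha₁ : a < 1) (hf₀ : ∀ k, 0 ≤ f k)
    (hfM : ∀ k, f k ≤ M) : Summable fun k ↦ a ^ k * f k :=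
  .of_nonneg_of_le (fun k ↦ mul_nonneg (pow_nonneg ha₀ k) (hf₀ k))
    (fun k ↦ mul_le_mul_of_nonneg_left (hfM k) (pow_nonneg ha₀ k))
    ((summable_geometric_of_lt_one ha₀ ha₁).mul_right M)

theorem tsum_pow_mul_le (ha₀ : 0 ≤ a) (ha₁ : a < 1) (hf₀ : ∀ k, 0 ≤ f k)
    (hfM : ∀ k, f k ≤ M) : ∑' k, a ^ k * f k ≤ M / (1 - a) := by
  calc ∑' k, a ^ k * f k
      ≤ ∑' k, a ^ k * M :=
        (summable_pow_mul_of_le ha₀ ha₁ hf₀ hfM).tsum_le_tsum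
          (fun k ↦ mul_le_mul_of_nonneg_left (hfM k) (pow_nonneg ha₀ k))
          ((summable_geometric_of_lt_one ha₀ ha₁).mul_right M)
    _ = M / (1 - a) := by
        rw [tsum_mul_right, tsum_geometric_of_lt_one ha₀ ha₁, inv_mul_eq_div]

theorem tsum_pow_mul_le_sum_range_add (ha₀ : 0 ≤ a) (ha₁ : a < 1) (hf₀ : ∀ k, 0 ≤ f k)
    (hfM : ∀ k, f k ≤ M) (n : ℕ) :
    ∑' k, a ^ k * f k ≤ ∑ k ∈ Finset.range n, a ^ k * f k + a ^ n * (M / (1 - a)) := by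
  rw [← (summable_pow_mul_of_le ha₀ ha₁ hf₀ hfM).sum_add_tsum_nat_add n]
  gcongr
  calc ∑' k, a ^ (k + n) * f (k + n)
      = a ^ n * ∑' k, a ^ k * f (k + n) := by
        rw [← tsum_mul_left]
        exact tsum_congr fun k ↦ by ring
    _ ≤ a ^ n * (M / (1 - a)) := by
        gcongr
        exact tsum_pow_mul_le ha₀ ha₁ (fun k ↦ hf₀ (k + n)) fun k ↦ hfM (k + n)

end WeightedSeries

theorem geom_sum_succ_le {r : ℝ} (hr : 1 < r) (n : ℕ) :
    ∑ k ∈ Finset.range (n + 1), r ^ k ≤ r ^ n * (r / (r - 1)) := by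
  have : 0 < r - 1 := sub_pos.mpr hr
  calc ∑ k ∈ Finset.range (n + 1), r ^ k
      = (r ^ (n + 1) - 1) / (r - 1) := geom_sum_eq hr.ne' _
    _ ≤ r ^ (n + 1) / (r - 1) := by gcongr; exact sub_le_self _ zero_le_one
    _ = r ^ n * (r / (r - 1)) := by ring

section Scales

variable {b t α : ℝ} {n : ℕ}

theorem exists_one_le_pow_mul_forall_lt (hb : 1 < b) (ht : 0 < t) :
    ∃ n : ℕ, 1 ≤ b ^ n * t ∧ ∀ m < n, b ^ m * t < 1 := by
  classical
  have hex : ∃ n : ℕ, 1 ≤ b ^ n * t := by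
    obtain ⟨n, hn⟩ := pow_unbounded_of_one_lt t⁻¹ hb
    exact ⟨n, ((inv_lt_iff_one_lt_mul₀ ht).mp hn).le⟩
  exact ⟨Nat.find hex, Nat.find_spec hex, fun m hm ↦ not_le.mp (Nat.find_min hex hm)⟩

theorem rpow_neg_pow_le_rpow (hb : 0 < b) (ht : 0 ≤ t) (hα : 0 ≤ α) (h : 1 ≤ b ^ n * t) :
    (b ^ (-α)) ^ n ≤ t ^ α := by
  calc (b ^ (-α)) ^ n
      = ((b ^ n) ^ α)⁻¹ := by rw [rpow_pow_comm hb.le, rpow_neg (by positivity)]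
    _ ≤ t ^ α := by
        rw [inv_le_iff_one_le_mul₀' (by positivity), ← mul_rpow (by positivity) ht]
        exact one_le_rpow h hα

theorem mul_rpow_one_sub_pow_le_rpow (hb : 0 ≤ b) (ht : 0 ≤ t) (hα : α ≤ 1)
    (h : b ^ n * t ≤ 1) : t * (b ^ (1 - α)) ^ n ≤ t ^ α := by
  have hsplit : t ^ α * t ^ (1 - α) = t := by
    rw [← rpow_add' ht (by simp), add_sub_cancel, rpow_one]
  calc t * (b ^ (1 - α)) ^ n
      = t ^ α * (b ^ n * t) ^ (1 - α) := by
        rw [mul_rpow (by positivity) ht, ← rpow_pow_comm hb, mul_left_comm, hsplit, mul_comm]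
    _ ≤ t ^ α := mul_le_of_le_one_right (by positivity)
        (rpow_le_one (by positivity) h (sub_nonneg.mpr hα))

theorem mul_sum_range_rpow_one_sub_pow_le (hb : 1 < b) (ht : 0 ≤ t) (hα : α < 1)
    (h : ∀ m < n, b ^ m * t ≤ 1) :
    t * ∑ k ∈ Finset.range n, (b ^ (1 - α)) ^ k ≤
      b ^ (1 - α) / (b ^ (1 - α) - 1) * t ^ α := by
  have hr : 1 < b ^ (1 - α) := one_lt_rpow hb (sub_pos.mpr hα)
  have : 0 < b ^ (1 - α) - 1 := sub_pos.mpr hr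
  cases n with
  | zero =>
    rw [Finset.sum_range_zero, mul_zero]
    positivity
  | succ m =>
    calc t * ∑ k ∈ Finset.range (m + 1), (b ^ (1 - α)) ^ k
        ≤ t * ((b ^ (1 - α)) ^ m * (b ^ (1 - α) / (b ^ (1 - α) - 1))) := by
          gcongr
          exact geom_sum_succ_le hr m
      _ = b ^ (1 - α) / (b ^ (1 - α) - 1) * (t * (b ^ (1 - α)) ^ m) := by ring
      _ ≤ b ^ (1 - α) / (b ^ (1 - α) - 1) * t ^ α := by
          gcongr
          exact mul_rpow_one_sub_pow_le_rpow (by positivity) ht hα.le (h m m.lt_succ_self)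

end Scales

theorem tsum_rpow_neg_pow_mul_le {b t α M L : ℝ} {f : ℕ → ℝ} (hb : 1 < b) (ht : 0 ≤ t)
    (hα : α ∈ Set.Ioo (0 : ℝ) 1) (hf₀ : ∀ k, 0 ≤ f k) (hfM : ∀ k, f k ≤ M)
    (hfL : ∀ k, f k ≤ L * (b ^ k * t)) :
    ∑' k, (b ^ (-α)) ^ k * f k ≤
      (M / (1 - b ^ (-α)) + L * (b ^ (1 - α) / (b ^ (1 - α) - 1))) * t ^ α := by
  obtain ⟨hα₀, hα₁⟩ := hα
  have hb₀ : 0 < b := one_pos.trans hb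
  obtain rfl | ht := ht.eq_or_lt
  · have hf : ∀ k, f k = 0 := fun k ↦ le_antisymm (by simpa using hfL k) (hf₀ k)
    simp [hf, zero_rpow hα₀.ne']
  obtain ⟨n, hn, hlt⟩ := exists_one_le_pow_mul_forall_lt hb ht
  have ha₁ : b ^ (-α) < 1 := rpow_lt_one_of_one_lt_of_neg hb (neg_lt_zero.mpr hα₀)
  have hM : 0 ≤ M := (hf₀ 0).trans (hfM 0)
  have hL : 0 ≤ L := nonneg_of_mul_nonneg_left ((hf₀ 0).trans (hfL 0)) (by positivity)
  have hratio : b ^ (-α) * b = b ^ (1 - α) := by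
    rw [← rpow_add_one hb₀.ne', neg_add_eq_sub]
  have hhead : ∑ k ∈ Finset.range n, (b ^ (-α)) ^ k * f k ≤
      L * (b ^ (1 - α) / (b ^ (1 - α) - 1) * t ^ α) :=
    calc ∑ k ∈ Finset.range n, (b ^ (-α)) ^ k * f k
        ≤ ∑ k ∈ Finset.range n, (b ^ (-α)) ^ k * (L * (b ^ k * t)) := by
          gcongr with k
          exact hfL k
      _ = L * (t * ∑ k ∈ Finset.range n, (b ^ (1 - α)) ^ k) := by
          simp only [Finset.mul_sum, ← hratio, mul_pow]
          exact Finset.sum_congr rfl fun k _ ↦ by ring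
      _ ≤ L * (b ^ (1 - α) / (b ^ (1 - α) - 1) * t ^ α) := by
          refine mul_le_mul_of_nonneg_left ?_ hL
          exact mul_sum_range_rpow_one_sub_pow_le hb ht.le hα₁ fun m hm ↦ (hlt m hm).le
  have htail : (b ^ (-α)) ^ n * (M / (1 - b ^ (-α))) ≤ t ^ α * (M / (1 - b ^ (-α))) :=
    mul_le_mul_of_nonneg_right (rpow_neg_pow_le_rpow hb₀ ht.le hα₀.le hn)
      (div_nonneg hM (sub_nonneg.mpr ha₁.le))
  linarith [tsum_pow_mul_le_sum_range_add (by positivity) ha₁ hf₀ hfM n]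

theorem tsum_rpow_neg_pow_mul_two_mul_abs_sin_le {b α : ℝ} (hb : 1 < b)
    (hα : α ∈ Set.Ioo (0 : ℝ) 1) (c h : ℝ) :
    ∑' k : ℕ, (b ^ (-α)) ^ k * (2 * |sin (b ^ k * c * h / 2)|) ≤
      (2 / (1 - b ^ (-α)) + |c| * (b ^ (1 - α) / (b ^ (1 - α) - 1))) * |h| ^ α := by
  refine tsum_rpow_neg_pow_mul_le hb (abs_nonneg h) hα (fun k ↦ by positivity)
    (fun k ↦ mul_le_of_le_one_right zero_le_two (abs_sin_le_one _)) fun k ↦ ?_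
  calc 2 * |sin (b ^ k * c * h / 2)|
      ≤ 2 * |b ^ k * c * h / 2| := mul_le_mul_of_nonneg_left abs_sin_le_abs zero_le_two
    _ = |c| * (b ^ k * |h|) := by
        rw [abs_div, abs_mul, abs_mul, abs_of_pos (by positivity : 0 < b ^ k), abs_two]
        ring

theorem two_div_one_sub_add_pi_mul_le {a r : ℝ} (ha : a < 1) (hr : 1 < r) :
    2 / (1 - a) + π * (r / (r - 1)) ≤ 2 * a / (1 - a) + 2 * r * π / (r - 1) := by
  have ha' : 1 - a ≠ 0 := (sub_pos.mpr ha).ne'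
  have hsplit : 2 / (1 - a) = 2 * a / (1 - a) + 2 := by
    field_simp
    ring
  have hratio : 1 ≤ r / (r - 1) := (one_le_div (sub_pos.mpr hr)).mpr (sub_le_self r zero_le_one)
  have htwo : 2 ≤ π * (r / (r - 1)) := two_le_pi.trans (le_mul_of_one_le_right pi_nonneg hratio)
  calc 2 / (1 - a) + π * (r / (r - 1))
      = 2 * a / (1 - a) + (2 + π * (r / (r - 1))) := by rw [hsplit, add_assoc]
    _ ≤ 2 * a / (1 - a) + (π * (r / (r - 1)) + π * (r / (r - 1))) := by gcongr
    _ = 2 * a / (1 - a) + 2 * r * π / (r - 1) := by ring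

theorem weierstrass_modulus_sum_bound_general (α : ℝ) (hα : α ∈ Set.Ioo (0 : ℝ) 1) (h : ℝ) :
    (∑' k : ℕ, (2 : ℝ) ^ (-(α * (k : ℝ)) + 1) * |Real.sin ((2 : ℝ) ^ ((k : ℤ) - 1) * π * h)|) ≤
      ((2 : ℝ) ^ (1 - α) / (1 - (2 : ℝ) ^ (-α))
          + (2 : ℝ) ^ (2 - α) * π / ((2 : ℝ) ^ (1 - α) - 1)) * |h| ^ α := by
  have hterm (k : ℕ) :
      (2 : ℝ) ^ (-(α * (k : ℝ)) + 1) * |sin ((2 : ℝ) ^ ((k : ℤ) - 1) * π * h)| =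
        (2 ^ (-α)) ^ k * (2 * |sin (2 ^ k * π * h / 2)|) := by
    rw [rpow_add_one two_ne_zero, ← neg_mul, rpow_mul_natCast zero_le_two,
      zpow_sub_one₀ two_ne_zero, zpow_natCast, mul_assoc]
    ring_nf
  have ha : (2 : ℝ) ^ (-α) < 1 := rpow_lt_one_of_one_lt_of_neg one_lt_two (neg_lt_zero.mpr hα.1)
  have hr : 1 < (2 : ℝ) ^ (1 - α) := one_lt_rpow one_lt_two (sub_pos.mpr hα.2)
  have hnum_tail : (2 : ℝ) ^ (1 - α) = 2 * 2 ^ (-α) := by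
    rw [sub_eq_add_neg, rpow_one_add' zero_le_two (by linarith [hα.2])]
  have hnum_head : (2 : ℝ) ^ (2 - α) = 2 * 2 ^ (1 - α) := by
    rw [← rpow_one_add' zero_le_two (by linarith [hα.2])]
    ring_nf
  calc _ = ∑' k : ℕ, ((2 : ℝ) ^ (-α)) ^ k * (2 * |sin (2 ^ k * π * h / 2)|) := tsum_congr hterm
    _ ≤ (2 / (1 - 2 ^ (-α)) + π * (2 ^ (1 - α) / (2 ^ (1 - α) - 1))) * |h| ^ α := by
        simpa only [abs_of_pos pi_pos] using
          tsum_rpow_neg_pow_mul_two_mul_abs_sin_le one_lt_two hα π h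
    _ ≤ (2 * 2 ^ (-α) / (1 - 2 ^ (-α)) + 2 * 2 ^ (1 - α) * π / (2 ^ (1 - α) - 1)) * |h| ^ α := by
        gcongr ?_ * _
        exact two_div_one_sub_add_pi_mul_le ha hr
    _ = _ := by rw [← hnum_tail, ← hnum_head]

/-- For `α ∈ (0,1)` and `0 < |h| ≤ 1`:
`∑_{k=0}^∞ 2^{−αk+1} |sin(2^{k−1}πh)| ≤ (2^{1−α}/(1−2^{−α}) + 2^{2−α}π/(2^{1−α}−1)) |h|^α`. -/
theorem weierstrass_modulus_sum_bound (α : ℝ) (hα : α ∈ Set.Ioo (0 : ℝ) 1)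
    (h : ℝ) (hne : h ≠ 0) (hle : |h| ≤ 1) :
    (∑' k : ℕ, (2 : ℝ) ^ (-(α * (k : ℝ)) + 1) * |Real.sin ((2 : ℝ) ^ ((k : ℤ) - 1) * π * h)|) ≤
      ((2 : ℝ) ^ (1 - α) / (1 - (2 : ℝ) ^ (-α))
          + (2 : ℝ) ^ (2 - α) * π / ((2 : ℝ) ^ (1 - α) - 1)) * |h| ^ α :=
  weierstrass_modulus_sum_bound_general α hα h
end
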